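/- arXiv:math/9911269 — 2 statements merged into one kernel-verified Lean document; each statement's English description precedes it below -/
import Mathlib

section
/- Let E be an oriented real vector bundle with (n+1)-dimensional fibre over a smooth manifold M, equipped with a metric and an SO(n+1)-connection ω with curvature Ω, and let Ψ be the n-form on the unit sphere bundle of E defined from (u, θ, ω, Ω) as in the construction. Then dΨ = 0 if n = 2m is even, and dΨ = −E(Ω) if n = 2m+1 is odd, where E(Ω) = (1/((4π)^{m+1}(m+1)!)) Σ_τ (−1)^τ Ω_{τ(1)τ(2)} ⋯ Ω_{τ(n)τ(n+1)} is the Euler curvature form of E (the sum over all permutations τ of {1,…,n+1}). -/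
/-!
STATEMENT 2 (Proposition 1.1(1) of "A secondary Chern–Euler class"):
Let `E` be an oriented real vector bundle with `(n+1)`-dimensional fibre over
a smooth manifold `M`, with a metric and an `SO(n+1)`-connection `ω` with
curvature `Ω = dω + ω ∧ ω`, and let `Ψ` be the `n`-form on the unit sphere
bundle of `E` built from `(u, θ, ω, Ω)` as in Chern's construction.  Then
`dΨ = 0` if `n` is even, and `dΨ = −E(Ω)` if `n = 2m+1` is odd, where
`E(Ω) = (1/((4π)^{m+1}(m+1)!)) Σ_τ (−1)^τ Ω_{τ(1)τ(2)} ⋯ Ω_{τ(n)τ(n+1)}`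
is the Euler curvature form of `E`.

Mathlib has no differential forms on manifolds (nor principal connections),
so the calculus of (locally defined) differential forms on the sphere bundle
is abstracted into an associative `ℝ`-algebra `A` together with an `ℝ`-linear
map `d` (the exterior differential).  The generators are the components
`u i : A` (degree 0) of the tautological unit vector with respect to a local
oriented orthonormal frame, the connection forms `ω i j` (degree 1), the
forms `θ i = d(u i) + Σⱼ ω i j * u j` (degree 1) and the curvature forms
`Ω i j = d(ω i j) + Σₖ ω i k * ω k j` (degree 2).  The hypotheses record the
structure equations, `Σ uᵢ² = 1` (the unit sphere bundle), skew-symmetry of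
`ω` (an `SO(n+1)`-connection), the graded commutation rules for the degrees
of the generators, `d ∘ d = 0`, and the graded Leibniz rule on products with
the generators.  Indices are `0`-based: the paper's `u_{τ(1)}` is `u (τ 0)`.
-/

open scoped Nat

noncomputable section

/-- The volume `c_n` of the Euclidean `n`-sphere: `2(2π)^m/(n−1)‼` for
`n = 2m` and `(2π)^{m+1}/(n−1)‼` for `n = 2m+1`. -/
def sphereVolume (n : ℕ) : ℝ :=
  if Even n then 2 * (2 * Real.pi) ^ (n / 2) / ((n - 1)‼ : ℝ)
  else (2 * Real.pi) ^ (n / 2 + 1) / ((n - 1)‼ : ℝ)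

/-- The `n`-form `Ψ_j = Σ_τ (−1)^τ u_{τ(1)} θ_{τ(2)} ⋯ θ_{τ(n−2j+1)}
Ω_{τ(n−2j+2)τ(n−2j+3)} ⋯ Ω_{τ(n)τ(n+1)}`, the sum over all permutations `τ`
of the `n+1` indices (written `0`-based). -/
def psiJ {A : Type*} [Ring A] (n : ℕ)
    (u θ : Fin (n + 1) → A) (Ω : Fin (n + 1) → Fin (n + 1) → A)
    (j : ℕ) (hj : 2 * j ≤ n) : A :=
  ∑ τ : Equiv.Perm (Fin (n + 1)),
    (Equiv.Perm.sign τ : ℤ) •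
      (u (τ 0) *
        (List.ofFn fun i : Fin (n - 2 * j) =>
          θ (τ ⟨i.1 + 1, by have := i.isLt; omega⟩)).prod *
        (List.ofFn fun t : Fin j =>
          Ω (τ ⟨n - 2 * j + 1 + 2 * t.1, by have := t.isLt; omega⟩)
            (τ ⟨n - 2 * j + 2 + 2 * t.1, by have := t.isLt; omega⟩)).prod)

/-- The `n`-form
`Ψ = (1/((n−1)‼ c_n)) Σ_{j=0}^m Ψ_j/(2^j j! (n−2j)‼)`, where `m = n/2`. -/
def psiForm {A : Type*} [Ring A] [Algebra ℝ A] (n : ℕ)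
    (u θ : Fin (n + 1) → A) (Ω : Fin (n + 1) → Fin (n + 1) → A) : A :=
  (((n - 1)‼ : ℝ) * sphereVolume n)⁻¹ •
    ∑ j : Fin (n / 2 + 1),
      ((2 ^ j.1 * j.1.factorial * (n - 2 * j.1)‼ : ℝ))⁻¹ •
        psiJ n u θ Ω j.1 (by have := j.isLt; omega)

/-- The Euler curvature form (for `n = 2m+1` odd, so that `E` has even rank
`n+1 = 2m+2` and `m + 1 = n/2 + 1`):
`E(Ω) = (1/((4π)^{m+1}(m+1)!)) Σ_τ (−1)^τ Ω_{τ(1)τ(2)} ⋯ Ω_{τ(n)τ(n+1)}`. -/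
def eulerCurvatureForm {A : Type*} [Ring A] [Algebra ℝ A] (n : ℕ)
    (Ω : Fin (n + 1) → Fin (n + 1) → A) : A :=
  ((4 * Real.pi) ^ (n / 2 + 1) * ((n / 2 + 1).factorial : ℝ))⁻¹ •
    ∑ τ : Equiv.Perm (Fin (n + 1)),
      (Equiv.Perm.sign τ : ℤ) •
        (List.ofFn fun t : Fin ((n + 1) / 2) =>
          Ω (τ ⟨2 * t.1, by have := t.isLt; omega⟩)
            (τ ⟨2 * t.1 + 1, by have := t.isLt; omega⟩)).prod

/-!
Chern's forms are Berezin integrals: with `U = ∑ u i e i`, `Θ = ∑ θ i e i` and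
`R = ∑ Ω i j e i e j` in the forms with values in the exterior algebra of the fibre, `Ψ_j` is the
top coefficient `∫ U Θ ^ (n - 2 j) R ^ j`. Since `ω` is skew, `d ∫ X = ∫ D X` for the covariant
derivative `D`, and the structure equations become `D U = Θ`, `D Θ = Φ := ∑ (Ω u) i e i`, `D R = 0`.
Contraction `κ` with `u` lowers the fibre degree, so `∫ κ X = 0`; as `κ U = 1`, `κ Θ = 0` and
`κ R = -2 Φ`, applying this to `U Θ ^ a R ^ j` gives `∫ Θ ^ a R ^ j = -2 j ∫ U Φ Θ ^ a R ^ (j - 1)`.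
Hence `dΨ_j` is a combination of two consecutive forms `∫ U Φ Θ ^ (n - 2 j - 1) R ^ j`, and the
coefficients of `Ψ` make the sum telescope. What survives is zero for `n` even and a multiple of
`∫ U Φ R ^ m`, hence of `∫ R ^ (m + 1)`, for `n = 2 m + 1`.
-/

namespace ChernForm

open scoped TensorProduct
open CliffordAlgebra (contractLeft contractLeft_ι_mul contractLeft_one)

section Berezin

variable (R : Type*) [CommRing R] {N : ℕ}

/-- The `i`-th basis vector `e i` of the typical fibre, as an element of its exterior algebra. -/
abbrev frame (i : Fin N) : ExteriorAlgebra R (Fin N → R) :=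
  ExteriorAlgebra.ι R (Pi.single i 1)

/-- Contraction with the `k`-th coordinate covector, i.e. the derivative by the odd variable
`e k`. -/
abbrev contractCoord (k : Fin N) :
    ExteriorAlgebra R (Fin N → R) →ₗ[R] ExteriorAlgebra R (Fin N → R) :=
  contractLeft (LinearMap.proj k)

variable (N) in
/-- The coefficient of `e 0 ∧ ⋯ ∧ e (N - 1)` in an element of the exterior algebra, obtained by
extending the determinant by zero to all degrees other than `N`. -/
def topCoeff : ExteriorAlgebra R (Fin N → R) →ₗ[R] R :=
  ExteriorAlgebra.liftAlternating (Pi.single N Matrix.detRowAlternating)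

variable {R}

lemma frame_mul_frame_comm (i j : Fin N) : frame R i * frame R j = -(frame R j * frame R i) :=
  eq_neg_of_add_eq_zero_left (ExteriorAlgebra.ι_add_mul_swap _ _)

lemma contractCoord_frame_mul (k i : Fin N) (x : ExteriorAlgebra R (Fin N → R)) :
    contractCoord R k (frame R i * x)
      = (if k = i then x else 0) - frame R i * contractCoord R k x := by
  rw [contractCoord, contractLeft_ι_mul]
  simp [Pi.single_apply]

lemma contractLeft_mem_exteriorPower {M : Type*} [AddCommGroup M] [Module R M]
    (f : Module.Dual R M) (m : ℕ) {x : ExteriorAlgebra R M} (hx : x ∈ ⋀[R]^(m + 1) M) :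
    contractLeft f x ∈ ⋀[R]^m M := by
  induction m generalizing x with
  | zero =>
    rw [ExteriorAlgebra.exteriorPower, zero_add, pow_one] at hx
    obtain ⟨v, rfl⟩ := hx
    rw [CliffordAlgebra.contractLeft_ι, ExteriorAlgebra.exteriorPower, pow_zero]
    exact Submodule.algebraMap_mem _
  | succ m ih =>
    rw [ExteriorAlgebra.exteriorPower, pow_succ'] at hx
    induction hx using Submodule.mul_induction_on' with
    | mem_mul_mem v hv y hy =>
      obtain ⟨v, rfl⟩ := hv
      rw [contractLeft_ι_mul]
      refine sub_mem (Submodule.smul_mem _ _ hy) ?_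
      rw [ExteriorAlgebra.exteriorPower, pow_succ']
      exact Submodule.mul_mem_mul ⟨v, rfl⟩ (ih hy)
    | add y _ z _ hy hz => rw [map_add]; exact add_mem hy hz

lemma topCoeff_ιMulti (v : Fin N → Fin N → R) :
    topCoeff R N (ExteriorAlgebra.ιMulti R N v) = Matrix.det v := by
  rw [topCoeff, ExteriorAlgebra.liftAlternating_apply_ιMulti, Pi.single_eq_same]
  rfl

lemma topCoeff_ιMulti_of_ne {m : ℕ} (hm : m ≠ N) (v : Fin m → Fin N → R) :
    topCoeff R N (ExteriorAlgebra.ιMulti R m v) = 0 := by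
  rw [topCoeff, ExteriorAlgebra.liftAlternating_apply_ιMulti, Pi.single_eq_of_ne hm]
  rfl

lemma ιMulti_eq_zero_of_card_lt {m : ℕ} (hm : N < m) :
    ExteriorAlgebra.ιMulti R m = (0 : (Fin N → R) [⋀^Fin m]→ₗ[R] _) :=
  (Pi.basisFun R (Fin N)).ext_alternating fun f hf => by
    simpa [hm.not_ge] using Fintype.card_le_of_injective f hf

lemma topCoeff_eq_zero_of_mem_exteriorPower {m : ℕ} (hm : m ≠ N)
    {x : ExteriorAlgebra R (Fin N → R)} (hx : x ∈ ⋀[R]^m (Fin N → R)) :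
    topCoeff R N x = 0 := by
  rw [← ExteriorAlgebra.ιMulti_span_fixedDegree] at hx
  induction hx using Submodule.span_induction with
  | mem _ hv => obtain ⟨v, rfl⟩ := hv; exact topCoeff_ιMulti_of_ne hm v
  | zero => exact map_zero _
  | add x y _ _ hx hy => rw [map_add, hx, hy, add_zero]
  | smul r x _ hx => rw [map_smul, hx, smul_zero]

lemma topCoeff_contractLeft (f : Module.Dual R (Fin N → R))
    (x : ExteriorAlgebra R (Fin N → R)) : topCoeff R N (contractLeft f x) = 0 := by
  suffices topCoeff R N ∘ₗ contractLeft f = 0 from LinearMap.congr_fun this x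
  refine ExteriorAlgebra.lhom_ext fun m => AlternatingMap.ext fun v => ?_
  change topCoeff R N (contractLeft f (ExteriorAlgebra.ιMulti R m v)) = 0
  obtain _ | m := m
  · rw [ExteriorAlgebra.ιMulti_zero_apply, contractLeft_one, map_zero]
  · obtain rfl | hm := eq_or_ne m N
    · simp [ιMulti_eq_zero_of_card_lt (R := R) m.lt_succ_self]
    · exact topCoeff_eq_zero_of_mem_exteriorPower hm <| contractLeft_mem_exteriorPower f m <|
        ExteriorAlgebra.ιMulti_range R (m + 1) ⟨v, rfl⟩

lemma topCoeff_frame_mul_contractCoord (i k : Fin N) (x : ExteriorAlgebra R (Fin N → R)) :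
    topCoeff R N (frame R i * contractCoord R k x) = if k = i then topCoeff R N x else 0 := by
  have h : topCoeff R N (contractCoord R k (frame R i * x)) = 0 := topCoeff_contractLeft _ _
  rw [contractCoord_frame_mul, map_sub, sub_eq_zero, apply_ite (topCoeff R N), map_zero] at h
  exact h.symm

lemma topCoeff_ιMulti_perm (τ : Equiv.Perm (Fin N)) :
    topCoeff R N (ExteriorAlgebra.ιMulti R N fun i => Pi.single (τ i) 1)
      = (Equiv.Perm.sign τ : ℤ) := by
  have h := Matrix.det_permute τ (1 : Matrix (Fin N) (Fin N) R)
  rw [Matrix.det_one, mul_one] at h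
  rw [topCoeff_ιMulti, ← h]
  congr 1
  ext i j
  simp [Matrix.one_apply, Pi.single_apply, eq_comm]

lemma topCoeff_ιMulti_of_not_bijective {f : Fin N → Fin N} (hf : ¬ Function.Bijective f) :
    topCoeff R N (ExteriorAlgebra.ιMulti R N fun i => Pi.single (f i) 1) = 0 := by
  rw [ExteriorAlgebra.ιMulti_eq_zero_of_not_inj, map_zero]
  exact fun h => hf (Finite.injective_iff_bijective.mp (Function.Injective.of_comp
    (f := fun j : Fin N => (Pi.single j 1 : Fin N → R)) h))

end Berezin

section FrameForms

variable (R : Type*) [CommRing R] {A : Type*} [Ring A] [Algebra R A] {N : ℕ}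

variable (A N) in
/-- Forms (elements of `A`) with values in the exterior algebra of the fibre. The tensor product is
the ungraded one: forms commute with fibre vectors. -/
abbrev FibreForm : Type _ :=
  A ⊗[R] ExteriorAlgebra R (Fin N → R)

/-- The form `∑ i, a i ⊗ e i` with values in the fibre. -/
def vec (a : Fin N → A) : FibreForm R A N :=
  ∑ i, a i ⊗ₜ frame R i

/-- The form `∑ i j, b i j ⊗ (e i ∧ e j)` with values in fibre bivectors. -/
def bivec (b : Fin N → Fin N → A) : FibreForm R A N :=
  ∑ i, ∑ j, b i j ⊗ₜ (frame R i * frame R j)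

/-- Contraction `∑ k, u k ⊗ ∂/∂e k` with the fibre vector `u` (identified with a covector by the
metric). -/
def contraction (u : Fin N → A) : FibreForm R A N →ₗ[R] FibreForm R A N :=
  ∑ k, TensorProduct.map (LinearMap.mulLeft R (u k)) (contractCoord R k)

/-- The action `∑ i k, ω i k ⊗ (e i ∧ ∂/∂e k)` of a matrix of forms, extended from the fibre to
its exterior algebra as a derivation. -/
def connectionAction (ω : Fin N → Fin N → A) : FibreForm R A N →ₗ[R] FibreForm R A N :=
  ∑ i, ∑ k, TensorProduct.map (LinearMap.mulLeft R (ω i k))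
    (LinearMap.mulLeft R (frame R i) ∘ₗ contractCoord R k)

variable {R}

/-- The covariant exterior derivative `d + ω` on forms with values in the exterior algebra of the
fibre. -/
def covDeriv (d : A →ₗ[R] A) (ω : Fin N → Fin N → A) : FibreForm R A N →ₗ[R] FibreForm R A N :=
  d.rTensor _ + connectionAction R ω

/-- The Berezin integral: the coefficient of `e 0 ∧ ⋯ ∧ e (N - 1)` in a form with values in the
exterior algebra of the fibre. -/
def berezin : FibreForm R A N →ₗ[R] A :=
  (TensorProduct.rid R A).toLinearMap ∘ₗ (topCoeff R N).lTensor A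

lemma berezin_tmul (x : A) (y : ExteriorAlgebra R (Fin N → R)) :
    berezin (x ⊗ₜ[R] y) = topCoeff R N y • x := by
  simp [berezin]

lemma contraction_tmul (u : Fin N → A) (x : A) (y : ExteriorAlgebra R (Fin N → R)) :
    contraction R u (x ⊗ₜ y) = ∑ k, (u k * x) ⊗ₜ contractCoord R k y := by
  simp [contraction, LinearMap.sum_apply]

lemma connectionAction_tmul (ω : Fin N → Fin N → A) (x : A)
    (y : ExteriorAlgebra R (Fin N → R)) :
    connectionAction R ω (x ⊗ₜ y)
      = ∑ i, ∑ k, (ω i k * x) ⊗ₜ (frame R i * contractCoord R k y) := by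
  simp [connectionAction, LinearMap.sum_apply]

lemma vec_mul_tmul (a : Fin N → A) (x : A) (y : ExteriorAlgebra R (Fin N → R)) :
    vec R a * x ⊗ₜ y = ∑ i, (a i * x) ⊗ₜ (frame R i * y) := by
  simp only [vec, Finset.sum_mul, Algebra.TensorProduct.tmul_mul_tmul]

lemma vec_mul_vec (a b : Fin N → A) :
    vec R a * vec R b = ∑ i, ∑ j, (a i * b j) ⊗ₜ (frame R i * frame R j) := by
  simp only [vec, Finset.sum_mul_sum, Algebra.TensorProduct.tmul_mul_tmul]

lemma bivec_eq_sum_frame_mul_vec (b : Fin N → Fin N → A) :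
    bivec R b = ∑ i, vec R (Pi.single i (1 : A)) * vec R (b i) := by
  simp only [bivec, vec, Pi.single_apply, TensorProduct.ite_tmul, Finset.sum_ite_eq',
    Finset.mem_univ, if_true, Finset.mul_sum, Algebra.TensorProduct.tmul_mul_tmul, one_mul]

lemma vec_mul_vec_comm {a b : Fin N → A} (hab : ∀ i j, Commute (a i) (b j)) :
    vec R a * vec R b = -(vec R b * vec R a) := by
  rw [vec_mul_vec, vec_mul_vec, Finset.sum_comm, ← Finset.sum_neg_distrib]
  refine Finset.sum_congr rfl fun j _ => ?_
  rw [← Finset.sum_neg_distrib]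
  refine Finset.sum_congr rfl fun i _ => ?_
  rw [(hab i j).eq, frame_mul_frame_comm, TensorProduct.tmul_neg]

lemma commute_bivec_vec {b : Fin N → Fin N → A} {a : Fin N → A}
    (hba : ∀ i j k, Commute (b i j) (a k)) : Commute (bivec R b) (vec R a) := by
  refine Commute.sum_right _ _ _ fun k _ => Commute.sum_left _ _ _ fun i _ =>
    Commute.sum_left _ _ _ fun j _ => ?_
  rw [commute_iff_eq, Algebra.TensorProduct.tmul_mul_tmul, Algebra.TensorProduct.tmul_mul_tmul,
    (hba i j k).eq, mul_assoc, frame_mul_frame_comm j k, mul_neg, ← mul_assoc,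
    frame_mul_frame_comm i k, neg_mul, neg_neg, mul_assoc]

lemma contraction_vec_mul {u : Fin N → A} (hu : ∀ i x, Commute (u i) x) (a : Fin N → A)
    (X : FibreForm R A N) :
    contraction R u (vec R a * X)
      = (∑ k, u k * a k) ⊗ₜ 1 * X - vec R a * contraction R u X := by
  induction X using TensorProduct.induction_on with
  | zero => simp
  | add X Y hX hY => rw [mul_add, map_add, hX, hY, map_add]; noncomm_ring
  | tmul x y =>
    have hterm (i k : Fin N) : (u k * (a i * x)) ⊗ₜ[R] contractCoord R k (frame R i * y)
        = (if k = i then (u i * a i * x) ⊗ₜ y else 0)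
          - (a i * (u k * x)) ⊗ₜ (frame R i * contractCoord R k y) := by
      rw [contractCoord_frame_mul, TensorProduct.tmul_sub, ← mul_assoc, (hu k (a i)).eq, mul_assoc]
      split_ifs with h
      · rw [h, ← mul_assoc, (hu i (a i)).eq, mul_assoc]
      · rw [TensorProduct.tmul_zero]
    simp only [vec_mul_tmul, map_sum, contraction_tmul, hterm, Finset.sum_sub_distrib,
      Finset.sum_ite_eq', Finset.mem_univ, if_true, Finset.mul_sum, Finset.sum_mul,
      Algebra.TensorProduct.tmul_mul_tmul, one_mul, TensorProduct.sum_tmul]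
    rw [Finset.sum_comm (f := fun k i => (a i * (u k * x)) ⊗ₜ[R] _)]

lemma connectionAction_vec_mul {ω : Fin N → Fin N → A} {a : Fin N → A} {ε : R}
    (hωa : ∀ i k j, ω i k * a j = ε • (a j * ω i k)) (X : FibreForm R A N) :
    connectionAction R ω (vec R a * X)
      = vec R (fun i => ∑ k, ω i k * a k) * X + ε • (vec R a * connectionAction R ω X) := by
  induction X using TensorProduct.induction_on with
  | zero => simp
  | add X Y hX hY => rw [mul_add, map_add, hX, hY, map_add, mul_add, mul_add, smul_add]; abel
  | tmul x y =>
    have hterm (i k j : Fin N) :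
        (ω i k * (a j * x)) ⊗ₜ[R] (frame R i * contractCoord R k (frame R j * y))
        = (if k = j then (ω i j * a j * x) ⊗ₜ (frame R i * y) else 0)
          + ε • (a j * (ω i k * x)) ⊗ₜ (frame R j * (frame R i * contractCoord R k y)) := by
      rw [contractCoord_frame_mul, mul_sub, ← mul_assoc (frame R i), frame_mul_frame_comm i j,
        neg_mul, sub_neg_eq_add, TensorProduct.tmul_add, mul_assoc (frame R j), ← mul_assoc (a j),
        TensorProduct.smul_tmul', ← smul_mul_assoc, ← hωa, mul_assoc (ω i k)]
      split_ifs with h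
      · rw [h, mul_assoc]
      · rw [mul_zero, TensorProduct.tmul_zero]
    simp only [vec_mul_tmul, map_sum, connectionAction_tmul, hterm, Finset.sum_add_distrib,
      Finset.sum_ite_eq', Finset.mem_univ, if_true, Finset.mul_sum, Finset.sum_mul,
      TensorProduct.sum_tmul, Finset.smul_sum]
    congr 1
    · exact Finset.sum_comm
    · rw [Finset.sum_comm]
      refine Finset.sum_congr rfl fun j _ => ?_
      rw [Finset.sum_comm]

lemma rTensor_vec_mul {d : A →ₗ[R] A} {a : Fin N → A} {ε : R}
    (hda : ∀ i x, d (a i * x) = d (a i) * x + ε • (a i * d x)) (X : FibreForm R A N) :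
    d.rTensor _ (vec R a * X)
      = vec R (fun i => d (a i)) * X + ε • (vec R a * d.rTensor _ X) := by
  induction X using TensorProduct.induction_on with
  | zero => simp
  | add X Y hX hY => rw [mul_add, map_add, hX, hY, map_add, mul_add, mul_add, smul_add]; abel
  | tmul x y =>
    simp only [vec_mul_tmul, map_sum, LinearMap.rTensor_tmul, hda, TensorProduct.add_tmul,
      Finset.sum_add_distrib, Finset.smul_sum, TensorProduct.smul_tmul']

lemma vec_add (a b : Fin N → A) : vec R (fun i => a i + b i) = vec R a + vec R b := by
  simp only [vec, TensorProduct.add_tmul, Finset.sum_add_distrib]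

lemma covDeriv_vec_mul {d : A →ₗ[R] A} {ω : Fin N → Fin N → A} {a : Fin N → A} {ε : R}
    (hda : ∀ i x, d (a i * x) = d (a i) * x + ε • (a i * d x))
    (hωa : ∀ i k j, ω i k * a j = ε • (a j * ω i k)) (X : FibreForm R A N) :
    covDeriv d ω (vec R a * X)
      = vec R (fun i => d (a i) + ∑ k, ω i k * a k) * X + ε • (vec R a * covDeriv d ω X) := by
  rw [covDeriv, LinearMap.add_apply, LinearMap.add_apply, rTensor_vec_mul hda,
    connectionAction_vec_mul hωa, vec_add, add_mul, mul_add, smul_add]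
  abel

lemma berezin_contraction (u : Fin N → A) (X : FibreForm R A N) :
    berezin (contraction R u X) = 0 := by
  induction X using TensorProduct.induction_on with
  | zero => simp
  | add X Y hX hY => rw [map_add, map_add, hX, hY, add_zero]
  | tmul x y => simp [contraction_tmul, berezin_tmul, topCoeff_contractLeft]

lemma berezin_connectionAction (ω : Fin N → Fin N → A) (X : FibreForm R A N) :
    berezin (connectionAction R ω X) = (∑ i, ω i i) * berezin X := by
  induction X using TensorProduct.induction_on with
  | zero => simp
  | add X Y hX hY => rw [map_add, map_add, hX, hY, map_add, mul_add]
  | tmul x y =>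
    simp [connectionAction_tmul, berezin_tmul, topCoeff_frame_mul_contractCoord, ite_smul,
      Finset.sum_mul, Finset.smul_sum]

lemma berezin_rTensor (d : A →ₗ[R] A) (X : FibreForm R A N) :
    berezin (d.rTensor _ X) = d (berezin X) := by
  induction X using TensorProduct.induction_on with
  | zero => simp
  | add X Y hX hY => rw [map_add, map_add, hX, hY, map_add, map_add]
  | tmul x y => simp [berezin_tmul]

lemma berezin_covDeriv (d : A →ₗ[R] A) {ω : Fin N → Fin N → A} (hω : ∑ i, ω i i = 0)
    (X : FibreForm R A N) :
    berezin (covDeriv d ω X) = d (berezin X) := by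
  rw [covDeriv, LinearMap.add_apply, map_add, berezin_rTensor, berezin_connectionAction, hω,
    zero_mul, add_zero]

lemma sum_vec (b : Fin N → Fin N → A) :
    ∑ i, vec R (b i) = vec R fun j => ∑ i, b i j := by
  simp only [vec, TensorProduct.sum_tmul]
  exact Finset.sum_comm

lemma sum_vec_mul_vec_eq_bivec (a b : Fin N → Fin N → A) :
    ∑ k, vec R (a k) * vec R (b k) = bivec R fun i j => ∑ k, a k i * b k j := by
  simp only [vec_mul_vec, bivec, TensorProduct.sum_tmul]
  rw [Finset.sum_comm]
  exact Finset.sum_congr rfl fun i _ => Finset.sum_comm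

lemma contraction_bivec_mul {u : Fin N → A} (hu : ∀ i x, Commute (u i) x)
    (b : Fin N → Fin N → A) (X : FibreForm R A N) :
    contraction R u (bivec R b * X)
      = vec R (fun j => ∑ i, u i * b i j) * X - vec R (fun i => ∑ j, u j * b i j) * X
        + bivec R b * contraction R u X := by
  have hterm (i : Fin N) :
      contraction R u (vec R (Pi.single i (1 : A)) * vec R (b i) * X)
        = vec R (fun j => u i * b i j) * X
          - vec R (Pi.single i (∑ j, u j * b i j)) * X
          + vec R (Pi.single i (1 : A)) * vec R (b i) * contraction R u X := by
    have hcoord : ∑ k, u k * (Pi.single i 1 : Fin N → A) k = u i := by simp [Pi.single_apply]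
    have hleft_mul : (u i ⊗ₜ 1 : FibreForm R A N) * vec R (b i)
        = vec R fun j => u i * b i j := by
      simp [vec, Finset.mul_sum]
    have hmul_right (c : A) : vec R (Pi.single i (1 : A)) * c ⊗ₜ 1 = vec R (Pi.single i c) := by
      simp [vec, Pi.single_apply, TensorProduct.ite_tmul]
    rw [mul_assoc, contraction_vec_mul hu, contraction_vec_mul hu, hcoord, mul_sub, ← mul_assoc,
      hleft_mul, ← mul_assoc, hmul_right, ← mul_assoc, sub_sub_eq_add_sub, sub_add_eq_add_sub]
  simp only [bivec_eq_sum_frame_mul_vec b, Finset.sum_mul, map_sum, hterm,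
    Finset.sum_add_distrib, Finset.sum_sub_distrib]
  simp only [← Finset.sum_mul, sum_vec, Finset.sum_pi_single, Finset.mem_univ, if_true]

lemma covDeriv_bivec_mul {d : A →ₗ[R] A} (hd : d 1 = 0) {ω b : Fin N → Fin N → A}
    (hdb : ∀ i j x, d (b i j * x) = d (b i j) * x + b i j * d x)
    (hωb : ∀ i j k l, Commute (ω i j) (b k l)) (X : FibreForm R A N) :
    covDeriv d ω (bivec R b * X)
      = bivec R (fun i j => d (b i j) + ∑ k, ω i k * b k j + ∑ k, ω j k * b i k) * X
        + bivec R b * covDeriv d ω X := by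
  have hframe (i : Fin N) (Y : FibreForm R A N) :
      covDeriv d ω (vec R (Pi.single i (1 : A)) * Y)
        = vec R (fun j => ω j i) * Y + vec R (Pi.single i (1 : A)) * covDeriv d ω Y := by
    rw [covDeriv_vec_mul (ε := 1)]
    · simp [Pi.single_apply, apply_ite d, hd]
    · intro j x
      by_cases h : j = i <;> simp [h, hd]
    · intro j k l
      by_cases h : l = i <;> simp [h]
  have hvec (i : Fin N) : covDeriv d ω (vec R (b i) * X)
      = vec R (fun j => d (b i j) + ∑ k, ω j k * b i k) * X + vec R (b i) * covDeriv d ω X := by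
    simpa using covDeriv_vec_mul (ε := 1) (by simpa using hdb i)
      (fun j k l => (hωb j k i l).eq.trans (one_smul R _).symm) X
  have hcollect : ∑ i, vec R (fun j => ω j i) * vec R (b i) + ∑ i, vec R (Pi.single i (1 : A)) *
      vec R (fun j => d (b i j) + ∑ k, ω j k * b i k)
      = bivec R fun i j => d (b i j) + ∑ k, ω i k * b k j + ∑ k, ω j k * b i k := by
    rw [sum_vec_mul_vec_eq_bivec, ← bivec_eq_sum_frame_mul_vec]
    simp only [bivec, ← Finset.sum_add_distrib, ← TensorProduct.add_tmul, add_left_comm, add_assoc]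
  rw [← hcollect, bivec_eq_sum_frame_mul_vec b]
  simp only [Finset.sum_mul, map_sum, mul_assoc, hframe, hvec, mul_add, add_mul,
    Finset.sum_add_distrib, add_assoc]

lemma covDeriv_one {d : A →ₗ[R] A} (hd : d 1 = 0) (ω : Fin N → Fin N → A) :
    covDeriv d ω (1 : FibreForm R A N) = 0 := by
  simp [covDeriv, Algebra.TensorProduct.one_def, connectionAction_tmul, hd]

lemma contraction_one (u : Fin N → A) :
    contraction R u (1 : FibreForm R A N) = 0 := by
  simp [Algebra.TensorProduct.one_def, contraction_tmul]

end FrameForms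

lemma map_pow_mul_of_skew_leibniz {R B : Type*} [CommRing R] [Ring B] [Algebra R B]
    {f : B →ₗ[R] B} {r s : B} {ε : R} (hf : ∀ X, f (r * X) = s * X + ε • (r * f X))
    (hsr : s * r = ε • (r * s)) (a : ℕ) {X : B} (hX : f X = 0) :
    f (r ^ a * X) = a • (s * r ^ (a - 1) * X) := by
  induction a with
  | zero => simp [hX]
  | succ a ih =>
    have hswap : ε • (r * (s * r ^ (a - 1) * X)) = s * r * r ^ (a - 1) * X := by
      rw [hsr]; simp only [smul_mul_assoc, mul_assoc]
    rw [pow_succ', mul_assoc, hf, ih, mul_smul_comm, smul_comm, hswap, add_tsub_cancel_right,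
      succ_nsmul', ← mul_assoc]
    obtain _ | a := a
    · simp
    · rw [add_tsub_cancel_right, mul_assoc s r, ← pow_succ']

section FrameTensor

variable (R : Type*) [CommRing R] {A : Type*} [Ring A] [Algebra R A] {N k l : ℕ}

/-- The form `∑ f, T f ⊗ (e (f 0) ∧ ⋯ ∧ e (f (k - 1)))` with components `T` indexed by words of
length `k`. -/
def frameTensor (T : (Fin k → Fin N) → A) : FibreForm R A N :=
  ∑ f, T f ⊗ₜ ExteriorAlgebra.ιMulti R k fun i => Pi.single (f i) 1

lemma frameTensor_mul (S : (Fin k → Fin N) → A) (T : (Fin l → Fin N) → A) :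
    frameTensor R S * frameTensor R T
      = frameTensor R fun f : Fin (k + l) → Fin N =>
          S (fun i => f (Fin.castAdd l i)) * T (fun i => f (Fin.natAdd k i)) := by
  rw [frameTensor, frameTensor, Finset.sum_mul_sum, ← Fintype.sum_prod_type', frameTensor,
    ← (Fin.appendEquiv k l).sum_comp]
  refine Finset.sum_congr rfl fun p _ => ?_
  rw [Algebra.TensorProduct.tmul_mul_tmul, ExteriorAlgebra.ιMulti_mul_ιMulti]
  congr 2
  · simp [Fin.appendEquiv]
  · simp [Fin.appendEquiv]
  · funext i
    refine Fin.addCases (fun i => ?_) (fun i => ?_) i <;> simp [Fin.appendEquiv]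

lemma one_eq_frameTensor :
    (1 : FibreForm R A N) = frameTensor R fun _ : Fin 0 → Fin N => (1 : A) := by
  simp [frameTensor, Algebra.TensorProduct.one_def]

lemma vec_eq_frameTensor (a : Fin N → A) :
    vec R a = frameTensor R fun f : Fin 1 → Fin N => a (f 0) := by
  rw [frameTensor, ← (Equiv.funUnique (Fin 1) (Fin N)).symm.sum_comp]
  simp [vec, ExteriorAlgebra.ιMulti_apply]

lemma bivec_eq_frameTensor (b : Fin N → Fin N → A) :
    bivec R b = frameTensor R fun f : Fin 2 → Fin N => b (f 0) (f 1) := by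
  rw [frameTensor, ← (finTwoArrowEquiv (Fin N)).symm.sum_comp, Fintype.sum_prod_type]
  simp [bivec, ExteriorAlgebra.ιMulti_apply, Matrix.vecTail]

lemma vec_pow_eq_frameTensor (a : Fin N → A) (m : ℕ) :
    vec R a ^ m
      = frameTensor R fun f : Fin m → Fin N => (List.ofFn fun i => a (f i)).prod := by
  induction m with
  | zero => simp [one_eq_frameTensor]
  | succ m ih =>
    rw [pow_succ, ih, vec_eq_frameTensor, frameTensor_mul]
    refine congrArg (frameTensor R) (funext fun f => ?_)
    rw [List.ofFn_succ', List.concat_eq_append, List.prod_append, List.prod_singleton]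
    rfl

lemma bivec_pow_eq_frameTensor (b : Fin N → Fin N → A) (m : ℕ) :
    bivec R b ^ m
      = frameTensor R fun f : Fin (2 * m) → Fin N => (List.ofFn fun t : Fin m =>
          b (f ⟨2 * t, by omega⟩) (f ⟨2 * t + 1, by omega⟩)).prod := by
  induction m with
  | zero => simp [one_eq_frameTensor]
  | succ m ih =>
    rw [pow_succ, ih, bivec_eq_frameTensor, frameTensor_mul]
    refine congrArg (frameTensor R) (funext fun f => ?_)
    rw [List.ofFn_succ', List.concat_eq_append, List.prod_append, List.prod_singleton]
    rfl

variable {R}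

lemma berezin_frameTensor (h : k = N) (T : (Fin k → Fin N) → A) :
    berezin (frameTensor R T)
      = ∑ τ : Equiv.Perm (Fin N), (Equiv.Perm.sign τ : ℤ) • T fun i => τ (Fin.cast h i) := by
  subst h
  simp only [frameTensor, map_sum, berezin_tmul]
  refine (Fintype.sum_of_injective _ (DFunLike.coe_injective (F := Equiv.Perm (Fin k))) _ _
    (fun f hf => ?_) fun τ => ?_).symm
  · rw [topCoeff_ιMulti_of_not_bijective, zero_smul]
    exact fun hbij => hf ⟨Equiv.ofBijective f hbij, rfl⟩
  · rw [topCoeff_ιMulti_perm, Int.cast_smul_eq_zsmul]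
    rfl

end FrameTensor

section SignedSums

variable {A : Type*} [Ring A] [Algebra ℝ A]

lemma psiJ_eq_berezin (n : ℕ) (u θ : Fin (n + 1) → A)
    (Ω : Fin (n + 1) → Fin (n + 1) → A) (j : ℕ) (hj : 2 * j ≤ n) :
    psiJ n u θ Ω j hj = berezin (vec ℝ u * vec ℝ θ ^ (n - 2 * j) * bivec ℝ Ω ^ j) := by
  have hcard : 1 + (n - 2 * j) + 2 * j = n + 1 := by omega
  rw [vec_eq_frameTensor, vec_pow_eq_frameTensor, bivec_pow_eq_frameTensor, frameTensor_mul,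
    frameTensor_mul, berezin_frameTensor hcard, psiJ]
  refine Finset.sum_congr rfl fun τ _ => ?_
  congr! 8
  · exact Fin.ext (Nat.add_comm _ _)
  · simp only [Fin.val_cast, Fin.val_natAdd]; omega
  · simp only [Fin.val_cast, Fin.val_natAdd]; omega

lemma eulerCurvatureForm_eq_berezin {n : ℕ} (hn : Odd n)
    (Ω : Fin (n + 1) → Fin (n + 1) → A) :
    eulerCurvatureForm n Ω = ((4 * Real.pi) ^ (n / 2 + 1) * ((n / 2 + 1)! : ℝ))⁻¹ •
      berezin (bivec ℝ Ω ^ ((n + 1) / 2)) := by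
  rw [eulerCurvatureForm, bivec_pow_eq_frameTensor, berezin_frameTensor (by grind)]
  rfl

end SignedSums

/-- The local calculus of forms on a unit sphere bundle: tautological coordinates `u`, their
covariant differentials `θ`, an orthogonal connection `ω` and its curvature `Ω`, inside an algebra
of forms with differential `d`. Degrees are encoded by the commutation and Leibniz rules of these
generators. -/
structure IsSphereBundleCalculus {A : Type*} [Ring A] [Algebra ℝ A] {N : ℕ} (d : A →ₗ[ℝ] A)
    (u θ : Fin N → A) (ω Ω : Fin N → Fin N → A) : Prop where
  theta_eq : ∀ i, θ i = d (u i) + ∑ j, ω i j * u j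
  curvature_eq : ∀ i j, Ω i j = d (ω i j) + ∑ k, ω i k * ω k j
  connection_skew : ∀ i j, ω i j = -ω j i
  sum_u_mul_u : ∑ i, u i * u i = 1
  commute_u : ∀ i x, Commute (u i) x
  commute_curvature : ∀ i j x, Commute (Ω i j) x
  theta_mul_connection : ∀ i j k, θ i * ω j k = -(ω j k * θ i)
  connection_mul_connection : ∀ i j k l, ω i j * ω k l = -(ω k l * ω i j)
  d_d : ∀ x, d (d x) = 0
  d_u_mul : ∀ i x, d (u i * x) = d (u i) * x + u i * d x
  d_theta_mul : ∀ i x, d (θ i * x) = d (θ i) * x - θ i * d x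
  d_connection_mul : ∀ i j x, d (ω i j * x) = d (ω i j) * x - ω i j * d x
  d_curvature_mul : ∀ i j x, d (Ω i j * x) = d (Ω i j) * x + Ω i j * d x

/-- The components of `Ω u`, which is the covariant differential of `θ`. -/
def curvatureApply {A : Type*} [Ring A] {N : ℕ} (Ω : Fin N → Fin N → A) (u : Fin N → A)
    (i : Fin N) : A :=
  ∑ k, Ω i k * u k

namespace IsSphereBundleCalculus

variable {A : Type*} [Ring A] [Algebra ℝ A] {N : ℕ} {d : A →ₗ[ℝ] A} {u θ : Fin N → A}
  {ω Ω : Fin N → Fin N → A} (h : IsSphereBundleCalculus d u θ ω Ω)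

include h

lemma d_one : d 1 = 0 := by
  have hu (i : Fin N) : u i * d 1 = 0 := by simpa using h.d_u_mul i 1
  calc d 1 = (∑ i, u i * u i) * d 1 := by rw [h.sum_u_mul_u, one_mul]
    _ = 0 := by simp [Finset.sum_mul, mul_assoc, hu]

lemma sum_connection_diag : ∑ i, ω i i = 0 := by
  have := IsAddTorsionFree.of_isTorsionFree ℝ A
  exact Finset.sum_eq_zero fun i _ => self_eq_neg.mp (h.connection_skew i i)

lemma d_connection (i j : Fin N) : d (ω i j) = Ω i j - ∑ k, ω i k * ω k j :=
  eq_sub_of_add_eq (h.curvature_eq i j).symm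

lemma d_u (i : Fin N) : d (u i) = θ i - ∑ k, ω i k * u k :=
  eq_sub_of_add_eq (h.theta_eq i).symm

lemma covDeriv_theta (i : Fin N) : d (θ i) + ∑ k, ω i k * θ k = curvatureApply Ω u i := by
  have hterm (j : Fin N) : d (ω i j * u j) = Ω i j * u j - ω i j * θ j
      + (ω i j * ∑ k, ω j k * u k - (∑ k, ω i k * ω k j) * u j) := by
    rw [h.d_connection_mul, h.d_connection, h.d_u]; noncomm_ring
  have hcancel : ∑ j, ω i j * ∑ k, ω j k * u k = ∑ j, (∑ k, ω i k * ω k j) * u j := by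
    simp only [Finset.mul_sum, Finset.sum_mul, mul_assoc]
    exact Finset.sum_comm
  rw [h.theta_eq i, map_add, h.d_d, zero_add, map_sum]
  simp only [hterm, Finset.sum_add_distrib, Finset.sum_sub_distrib, hcancel, curvatureApply]
  abel

lemma bianchi (i j : Fin N) :
    d (Ω i j) + ∑ k, ω i k * Ω k j + ∑ k, ω j k * Ω i k = 0 := by
  have hterm (k : Fin N) : d (ω i k * ω k j) = -(ω i k * Ω k j) - ω j k * Ω i k
      + (ω i k * (∑ l, ω k l * ω l j) - (∑ l, ω i l * ω l k) * ω k j) := by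
    rw [h.d_connection_mul, h.d_connection, h.d_connection, h.connection_skew j k, neg_mul,
      ← (h.commute_curvature i k (ω k j)).eq]
    noncomm_ring
  have hcancel : ∑ k, ω i k * (∑ l, ω k l * ω l j) = ∑ k, (∑ l, ω i l * ω l k) * ω k j := by
    simp only [Finset.mul_sum, Finset.sum_mul, mul_assoc]
    exact Finset.sum_comm
  rw [h.curvature_eq i j, map_add, h.d_d, zero_add, map_sum]
  simp only [hterm, Finset.sum_add_distrib, Finset.sum_sub_distrib, Finset.sum_neg_distrib,
    hcancel]
  abel

lemma curvature_skew (i j : Fin N) : Ω i j = -Ω j i := by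
  have hterm (k : Fin N) : ω i k * ω k j = -(ω j k * ω k i) := by
    rw [h.connection_mul_connection, h.connection_skew k j, h.connection_skew i k, neg_mul_neg]
  rw [h.curvature_eq i j, h.curvature_eq j i, h.connection_skew i j, map_neg,
    Finset.sum_congr rfl fun k _ => hterm k, Finset.sum_neg_distrib, neg_add]

lemma sum_u_mul_connection_mul_u : ∑ i, u i * ∑ k, ω i k * u k = 0 := by
  have := IsAddTorsionFree.of_isTorsionFree ℝ A
  refine self_eq_neg.mp ?_
  simp only [Finset.mul_sum]
  conv_lhs => rw [Finset.sum_comm]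
  simp only [← Finset.sum_neg_distrib]
  refine Finset.sum_congr rfl fun k _ => Finset.sum_congr rfl fun i _ => ?_
  rw [h.connection_skew i k, neg_mul, mul_neg, (h.commute_u i _).eq, mul_assoc,
    (h.commute_u k _).eq, (h.commute_u k _).eq, mul_assoc]

lemma sum_u_mul_theta : ∑ i, u i * θ i = 0 := by
  have := IsAddTorsionFree.of_isTorsionFree ℝ A
  have hdu : ∑ i, u i * θ i = ∑ i, u i * d (u i) := by
    simp only [h.theta_eq, mul_add, Finset.sum_add_distrib, h.sum_u_mul_connection_mul_u, add_zero]
  have hd : d (∑ i, u i * u i) = ∑ i, u i * d (u i) + ∑ i, u i * d (u i) := by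
    simp only [map_sum, h.d_u_mul, ← (h.commute_u _ (d _)).eq, Finset.sum_add_distrib]
  rw [h.sum_u_mul_u, h.d_one, ← hdu] at hd
  exact self_eq_neg.mp (eq_neg_of_add_eq_zero_left hd.symm)

lemma commute_curvatureApply (i : Fin N) (x : A) : Commute (curvatureApply Ω u i) x :=
  Commute.sum_left _ _ _ fun k _ => (h.commute_curvature i k x).mul_left (h.commute_u k x)

lemma covDeriv_u_mul (X : FibreForm ℝ A N) :
    covDeriv d ω (vec ℝ u * X) = vec ℝ θ * X + vec ℝ u * covDeriv d ω X := by
  rw [covDeriv_vec_mul (ε := 1) (by simpa using h.d_u_mul)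
    (fun i k j => by rw [one_smul, (h.commute_u j _).eq]), one_smul]
  simp only [← h.theta_eq]

lemma covDeriv_theta_mul (X : FibreForm ℝ A N) :
    covDeriv d ω (vec ℝ θ * X)
      = vec ℝ (curvatureApply Ω u) * X + (-1 : ℝ) • (vec ℝ θ * covDeriv d ω X) := by
  rw [covDeriv_vec_mul (ε := -1) (by simpa [sub_eq_add_neg] using h.d_theta_mul)
    (fun i k j => by rw [neg_one_smul, h.theta_mul_connection, neg_neg])]
  simp only [h.covDeriv_theta]

lemma covDeriv_curvature_mul (X : FibreForm ℝ A N) :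
    covDeriv d ω (bivec ℝ Ω * X) = bivec ℝ Ω * covDeriv d ω X := by
  rw [covDeriv_bivec_mul h.d_one h.d_curvature_mul
    fun i j k l => (h.commute_curvature k l (ω i j)).symm]
  simp [h.bianchi, bivec]

lemma contraction_u_mul (X : FibreForm ℝ A N) :
    contraction ℝ u (vec ℝ u * X) = X - vec ℝ u * contraction ℝ u X := by
  rw [contraction_vec_mul h.commute_u, h.sum_u_mul_u, ← Algebra.TensorProduct.one_def, one_mul]

lemma contraction_theta_mul (X : FibreForm ℝ A N) :
    contraction ℝ u (vec ℝ θ * X) = -(vec ℝ θ * contraction ℝ u X) := by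
  rw [contraction_vec_mul h.commute_u, h.sum_u_mul_theta, TensorProduct.zero_tmul, zero_mul,
    zero_sub]

lemma contraction_curvature_mul (X : FibreForm ℝ A N) :
    contraction ℝ u (bivec ℝ Ω * X)
      = (-2 : ℝ) • vec ℝ (curvatureApply Ω u) * X + bivec ℝ Ω * contraction ℝ u X := by
  have hleft : (fun j => ∑ i, u i * Ω i j) = fun j => -curvatureApply Ω u j := by
    funext j
    simp only [curvatureApply, ← Finset.sum_neg_distrib]
    exact Finset.sum_congr rfl fun i _ => by
      rw [(h.commute_u i _).eq, h.curvature_skew i j, neg_mul]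
  have hright : (fun i => ∑ j, u j * Ω i j) = curvatureApply Ω u :=
    funext fun i => Finset.sum_congr rfl fun j _ => (h.commute_u j _).eq
  have hneg : vec ℝ (fun j => -curvatureApply Ω u j) = -vec ℝ (curvatureApply Ω u) := by
    simp [vec, TensorProduct.neg_tmul]
  rw [contraction_bivec_mul h.commute_u, hleft, hright, hneg, neg_smul, two_smul]
  noncomm_ring

lemma covDeriv_curvature_pow (j : ℕ) : covDeriv d ω (bivec ℝ Ω ^ j) = 0 := by
  simpa using map_pow_mul_of_skew_leibniz (f := covDeriv d ω) (s := 0) (ε := 1)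
    (by simpa using h.covDeriv_curvature_mul) (by simp) j (covDeriv_one h.d_one ω)

lemma covDeriv_theta_pow_mul (a j : ℕ) :
    covDeriv d ω (vec ℝ θ ^ a * bivec ℝ Ω ^ j)
      = a • (vec ℝ (curvatureApply Ω u) * vec ℝ θ ^ (a - 1) * bivec ℝ Ω ^ j) :=
  map_pow_mul_of_skew_leibniz h.covDeriv_theta_mul
    (by rw [neg_one_smul, vec_mul_vec_comm fun i j => h.commute_curvatureApply i (θ j)]) a
    (h.covDeriv_curvature_pow j)

lemma contraction_theta_pow (a : ℕ) : contraction ℝ u (vec ℝ θ ^ a) = 0 := by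
  simpa using map_pow_mul_of_skew_leibniz (f := contraction ℝ u) (s := 0) (ε := -1)
    (by simpa using h.contraction_theta_mul) (by simp) a (contraction_one u)

lemma contraction_curvature_pow_mul (a j : ℕ) :
    contraction ℝ u (bivec ℝ Ω ^ j * vec ℝ θ ^ a)
      = j • ((-2 : ℝ) • vec ℝ (curvatureApply Ω u) * bivec ℝ Ω ^ (j - 1) * vec ℝ θ ^ a) :=
  map_pow_mul_of_skew_leibniz (ε := 1) (by simpa using h.contraction_curvature_mul)
    (by rw [one_smul]; exact ((commute_bivec_vec fun i j k =>
      h.commute_curvature i j (curvatureApply Ω u k)).symm.smul_left _)) j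
    (h.contraction_theta_pow a)

lemma berezin_eq_berezin_u_mul_contraction (X : FibreForm ℝ A N) :
    berezin X = berezin (vec ℝ u * contraction ℝ u X) := by
  have hzero := berezin_contraction u (vec ℝ u * X)
  rwa [h.contraction_u_mul, map_sub, sub_eq_zero] at hzero

lemma berezin_theta_pow_mul_curvature_pow (a j : ℕ) :
    berezin (vec ℝ θ ^ a * bivec ℝ Ω ^ j)
      = -((2 * j : ℝ) • berezin
        (vec ℝ u * vec ℝ (curvatureApply Ω u) * vec ℝ θ ^ a * bivec ℝ Ω ^ (j - 1))) := by
  have hcomm (k : ℕ) : Commute (bivec ℝ Ω ^ k) (vec ℝ θ ^ a) :=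
    (commute_bivec_vec fun i j k => h.commute_curvature i j (θ k)).pow_pow k a
  rw [← (hcomm j).eq, h.berezin_eq_berezin_u_mul_contraction, h.contraction_curvature_pow_mul,
    mul_assoc, (hcomm _).eq, ← Nat.cast_smul_eq_nsmul ℝ, smul_mul_assoc, smul_smul, mul_smul_comm,
    map_smul, ← neg_smul, mul_assoc, mul_assoc]
  congr 1
  ring

lemma d_berezin_u_mul (a j : ℕ) :
    d (berezin (vec ℝ u * vec ℝ θ ^ a * bivec ℝ Ω ^ j))
      = (a : ℝ) • berezin
          (vec ℝ u * vec ℝ (curvatureApply Ω u) * vec ℝ θ ^ (a - 1) * bivec ℝ Ω ^ j)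
        - (2 * j : ℝ) • berezin
          (vec ℝ u * vec ℝ (curvatureApply Ω u) * vec ℝ θ ^ (a + 1) * bivec ℝ Ω ^ (j - 1)) := by
  rw [← berezin_covDeriv d h.sum_connection_diag, mul_assoc, h.covDeriv_u_mul,
    h.covDeriv_theta_pow_mul, ← mul_assoc, ← pow_succ', map_add,
    h.berezin_theta_pow_mul_curvature_pow, neg_add_eq_sub, ← Nat.cast_smul_eq_nsmul ℝ,
    mul_smul_comm, map_smul]
  simp only [mul_assoc]

end IsSphereBundleCalculus

section ChernCoeff

/-- The coefficient `1 / (2 ^ j j! (n - 2 j)‼)` of `Ψ_j` in Chern's form. -/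
def chernCoeff (n j : ℕ) : ℝ :=
  (2 ^ j * j ! * (n - 2 * j)‼ : ℝ)⁻¹

lemma chernCoeff_mul_sub {n j : ℕ} (hj : 2 * (j + 1) ≤ n) :
    chernCoeff n j * ((n - 2 * j : ℕ) : ℝ) = chernCoeff n (j + 1) * (2 * (j + 1 : ℕ)) := by
  obtain ⟨k, rfl⟩ := Nat.exists_eq_add_of_le hj
  have hk : 2 * (j + 1) + k - 2 * j = k + 2 := by omega
  have hdouble : ((k ‼ : ℕ) : ℝ) ≠ 0 := mod_cast (Nat.doubleFactorial_pos k).ne'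
  have hfact : ((j ! : ℕ) : ℝ) ≠ 0 := mod_cast j.factorial_ne_zero
  rw [chernCoeff, chernCoeff, hk, Nat.add_sub_cancel_left, Nat.doubleFactorial_add_two,
    Nat.factorial_succ]
  push_cast
  field_simp
  ring

lemma sum_chernCoeff_smul {V : Type*} [AddCommGroup V] [Module ℝ V] (n : ℕ) (w : ℕ → V)
    (M : ℕ) (hM : 2 * M ≤ n) :
    ∑ j ∈ Finset.range (M + 1),
        chernCoeff n j • (((n - 2 * j : ℕ) : ℝ) • w j - (2 * j : ℝ) • w (j - 1))
      = (chernCoeff n M * ((n - 2 * M : ℕ) : ℝ)) • w M := by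
  induction M with
  | zero => simp [smul_smul]
  | succ M ih =>
    rw [Finset.sum_range_succ, ih (by omega), chernCoeff_mul_sub hM, smul_sub, smul_smul,
      smul_smul, add_tsub_cancel_right, add_sub_cancel]

lemma normalization_mul_chernCoeff {n : ℕ} (hn : Odd n) :
    (((n - 1)‼ : ℝ) * sphereVolume n)⁻¹ * chernCoeff n (n / 2)
      = ((4 * Real.pi) ^ (n / 2 + 1) * ((n / 2 + 1)! : ℝ))⁻¹ * (2 * (n / 2 + 1 : ℕ)) := by
  have hdouble : (((n - 1)‼ : ℕ) : ℝ) ≠ 0 := mod_cast (Nat.doubleFactorial_pos _).ne'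
  have hfact : (((n / 2)! : ℕ) : ℝ) ≠ 0 := mod_cast (n / 2).factorial_ne_zero
  have hfour : (4 * Real.pi) ^ (n / 2 + 1) = 2 ^ (n / 2 + 1) * (2 * Real.pi) ^ (n / 2 + 1) := by
    rw [← mul_pow]; ring
  have hsub : n - 2 * (n / 2) = 1 := by grind
  rw [sphereVolume, if_neg (Nat.not_even_iff_odd.mpr hn), mul_div_cancel₀ _ hdouble, chernCoeff,
    hsub, Nat.doubleFactorial, hfour, Nat.factorial_succ]
  push_cast
  field_simp
  ring

end ChernCoeff

section Transgression

variable {A : Type*} [Ring A] [Algebra ℝ A] {n : ℕ} {d : A →ₗ[ℝ] A}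
  {u θ : Fin (n + 1) → A} {ω Ω : Fin (n + 1) → Fin (n + 1) → A}

/-- The form `∫ u (Ω u) θ ^ (n - 2 j - 1) Ω ^ j`, in terms of which every `dΨ_j` is expressed. The
subtraction is truncated when `n = 2 j`, where this form only occurs with coefficient `0`. -/
def mixedForm (n : ℕ) (u θ : Fin (n + 1) → A) (Ω : Fin (n + 1) → Fin (n + 1) → A) (j : ℕ) : A :=
  berezin (vec ℝ u * vec ℝ (curvatureApply Ω u) * vec ℝ θ ^ (n - 2 * j - 1) * bivec ℝ Ω ^ j)

lemma d_psiJ (h : IsSphereBundleCalculus d u θ ω Ω) (j : ℕ) (hj : 2 * j ≤ n) :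
    d (psiJ n u θ Ω j hj)
      = ((n - 2 * j : ℕ) : ℝ) • mixedForm n u θ Ω j
        - (2 * j : ℝ) • mixedForm n u θ Ω (j - 1) := by
  rw [psiJ_eq_berezin, h.d_berezin_u_mul, mixedForm, mixedForm]
  obtain _ | j := j
  · simp
  · rw [show n - 2 * (j + 1 - 1) - 1 = n - 2 * (j + 1) + 1 by omega]

lemma d_psiForm (h : IsSphereBundleCalculus d u θ ω Ω) :
    d (psiForm n u θ Ω)
      = ((((n - 1)‼ : ℝ) * sphereVolume n)⁻¹ * (chernCoeff n (n / 2) * ((n % 2 : ℕ) : ℝ))) •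
        mixedForm n u θ Ω (n / 2) := by
  have htelescope := sum_chernCoeff_smul n (mixedForm n u θ Ω) (n / 2) (by omega)
  rw [Finset.sum_range, show n - 2 * (n / 2) = n % 2 by omega] at htelescope
  rw [psiForm, map_smul, map_sum, mul_smul, ← htelescope]
  congr 1
  refine Finset.sum_congr rfl fun j _ => ?_
  rw [map_smul, d_psiJ h, chernCoeff]

lemma eulerCurvatureForm_eq_mixedForm (h : IsSphereBundleCalculus d u θ ω Ω) (hn : Odd n) :
    eulerCurvatureForm n Ω
      = -((((4 * Real.pi) ^ (n / 2 + 1) * ((n / 2 + 1)! : ℝ))⁻¹ * (2 * (n / 2 + 1 : ℕ))) •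
        mixedForm n u θ Ω (n / 2)) := by
  have hpow := h.berezin_theta_pow_mul_curvature_pow 0 ((n + 1) / 2)
  rw [pow_zero, one_mul] at hpow
  rw [eulerCurvatureForm_eq_berezin hn, hpow, smul_neg, smul_smul, mixedForm,
    show n - 2 * (n / 2) - 1 = 0 by grind, show (n + 1) / 2 = n / 2 + 1 by grind,
    add_tsub_cancel_right, pow_zero]

end Transgression

end ChernForm

open ChernForm

theorem dPsi_eq_zero_or_neg_euler_form
    {A : Type*} [Ring A] [Algebra ℝ A]
    -- the exterior differential
    (d : A →ₗ[ℝ] A)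
    (n : ℕ)
    -- the tautological coordinates, the forms `θ`, the connection and
    -- curvature forms, with respect to a local oriented orthonormal frame
    (u θ : Fin (n + 1) → A) (ω Ω : Fin (n + 1) → Fin (n + 1) → A)
    -- `θ = du + ωu`
    (hθ : ∀ i, θ i = d (u i) + ∑ j, ω i j * u j)
    -- `Ω = dω + ω ∧ ω`
    (hΩ : ∀ i j, Ω i j = d (ω i j) + ∑ k, ω i k * ω k j)
    -- the connection is an `SO(n+1)`-connection
    (hskew : ∀ i j, ω i j = -ω j i)
    -- the unit sphere bundle: `Σᵢ uᵢ² = 1`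
    (hunit : (∑ i, u i * u i) = 1)
    -- graded commutation rules: `u` has degree 0, `Ω` degree 2 (both
    -- central), `θ` and `ω` degree 1 (they anticommute)
    (hu_comm : ∀ i x, u i * x = x * u i)
    (hΩ_comm : ∀ i j x, Ω i j * x = x * Ω i j)
    (hθθ : ∀ i j, θ i * θ j = -(θ j * θ i))
    (hθω : ∀ i j k, θ i * ω j k = -(ω j k * θ i))
    (hωω : ∀ i j k l, ω i j * ω k l = -(ω k l * ω i j))
    -- `d ∘ d = 0` and the graded Leibniz rule
    (hdd : ∀ x, d (d x) = 0)
    (hdu : ∀ i x, d (u i * x) = d (u i) * x + u i * d x)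
    (hdθ : ∀ i x, d (θ i * x) = d (θ i) * x - θ i * d x)
    (hdω : ∀ i j x, d (ω i j * x) = d (ω i j) * x - ω i j * d x)
    (hdΩ : ∀ i j x, d (Ω i j * x) = d (Ω i j) * x + Ω i j * d x) :
    (Even n → d (psiForm n u θ Ω) = 0) ∧
      (Odd n → d (psiForm n u θ Ω) = -eulerCurvatureForm n Ω) := by
  have h : IsSphereBundleCalculus d u θ ω Ω :=
    ⟨hθ, hΩ, hskew, hunit, hu_comm, hΩ_comm, hθω, hωω, hdd, hdu, hdθ, hdω, hdΩ⟩
  constructor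
  · intro hn
    rw [d_psiForm h, Nat.even_iff.mp hn, Nat.cast_zero, mul_zero, mul_zero, zero_smul]
  · intro hn
    rw [d_psiForm h, Nat.odd_iff.mp hn, Nat.cast_one, mul_one, normalization_mul_chernCoeff hn,
      eulerCurvatureForm_eq_mixedForm h hn, neg_neg]

end
end

section
/- Let ξ be a smooth oriented rank-n vector bundle over a smooth manifold M with an SO(n)-connection, let ν be the canonical trivial oriented real line bundle over M with the trivial connection, and let E = ν ⊕ ξ carry the induced metric and SO(n+1)-connection ω with curvature Ω (so the first row and the first column of Ω vanish identically). Then the n-form Ψ on the unit sphere bundle of E (identified with the fibrewise one-point compactification ξ̂ of ξ) is closed: dΨ = 0, for every n (both even and odd). -/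
/-!
STATEMENT 4 (end of Section 1 of "A secondary Chern–Euler class"):
Let `ξ` be a smooth oriented rank-`n` vector bundle over a smooth manifold `M`
with an `SO(n)`-connection, `ν` the canonical trivial oriented real line
bundle over `M` with the trivial connection, and `E = ν ⊕ ξ` with the induced
metric and `SO(n+1)`-connection `ω` with curvature `Ω` — so the first row and
the first column of `ω` and of `Ω` vanish identically.  Then the `n`-form `Ψ`
on the unit sphere bundle of `E` (identified with the fibrewise one-point
compactification `ξ̂` of `ξ`) is closed: `dΨ = 0` for every `n`, both even
and odd.

Mathlib has no differential forms on manifolds (nor principal connections),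
so the calculus of (locally defined) differential forms on the sphere bundle
is abstracted into an associative `ℝ`-algebra `A` together with an `ℝ`-linear
map `d` (the exterior differential), exactly as in the formalization of
Proposition 1.1; the extra hypotheses here are the vanishing of the first row
and the first column of `ω` and `Ω` (the index `0` corresponds to the
`ν`-summand).  Indices are `0`-based: the paper's `u_{τ(1)}` is `u (τ 0)`.
-/

open scoped Nat

noncomputable section

/-!
The argument is the Berezin calculus of Mathai and Quillen. In the exterior algebra `Λ` generated by
the frame `eᵢ`, with differential forms as coefficients, put `u = ∑ uᵢ eᵢ`, `θ = ∑ θᵢ eᵢ`,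
`Ω = ∑ Ωᵢⱼ eᵢ eⱼ` and `Ωu = ∑ Ωᵢₖ uₖ eᵢ`. Then `Ψⱼ` is the coefficient of `e₀ ⋯ eₙ` in
`u θ^(n-2j) Ω^j`. For a metric connection the operator `∇ = d + ω` computes `d` of this coefficient,
and the structure equations read `∇u = θ`, `∇θ = Ωu`, `∇Ω = 0`. With `X(m, j)` the top coefficient
of `u (Ωu) θ^m Ω^j`, this makes `dΨⱼ` the top coefficient of `θ^(n-2j+1) Ω^j` plus
`(n - 2j) X(n-2j-1, j)`.

A contraction has no top coefficient. Contracting with the unit vector `u`, which is orthogonal to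
`θ`, therefore gives the top coefficient of `θ^m Ω^j` as `-2j X(m, j-1)`. The weights in `Ψ` make
the sum of the `dΨⱼ` telescope: nothing is left for even `n`, and a multiple of the Euler form, the
top coefficient of `Ω^((n+1)/2)`, for odd `n`. Contracting instead with the parallel unit section
`e₀`, for which `Ω e₀ = 0`, shows that this Euler form vanishes.
-/

namespace ChernEuler

open scoped TensorProduct
open ExteriorAlgebra (ι ιMulti)
open CliffordAlgebra (contractLeft contractLeft_ι_mul contractLeft_one)

section OddEvenOperators

variable {B : Type*} [Ring B] {D : B →+ B}

lemma map_pow_mul_of_antiderivation {y v : B} (hvy : v * y = -(y * v))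
    (hD : ∀ w, D (y * w) = v * w - y * D w) (m : ℕ) (w : B) :
    D (y ^ m * w) = m • (v * y ^ (m - 1) * w) + (-y) ^ m * D w := by
  induction m with
  | zero => simp
  | succ m ih =>
    have hvym : m • (y * (v * y ^ (m - 1))) = -(m • (v * y ^ m)) := by
      cases m with
      | zero => simp
      | succ m =>
        rw [← mul_assoc, ← neg_eq_iff_eq_neg.2 hvy, Nat.add_sub_cancel, neg_mul, mul_assoc,
          ← pow_succ', smul_neg]
    have hsign : y * (-y) ^ m = -(-y) ^ (m + 1) := by rw [pow_succ', neg_mul, neg_neg]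
    calc D (y ^ (m + 1) * w)
        = v * y ^ m * w - (m • (y * (v * y ^ (m - 1))) * w + y * (-y) ^ m * D w) := by
          rw [pow_succ', mul_assoc, hD, ih]
          simp only [mul_add, mul_assoc, mul_smul_comm, smul_mul_assoc]
      _ = (m + 1) • (v * y ^ m * w) + (-y) ^ (m + 1) * D w := by
          rw [hvym, hsign, succ_nsmul]
          simp only [neg_mul, smul_mul_assoc]
          abel

lemma map_pow_mul_of_derivation {z v : B} (hvz : Commute v z)
    (hD : ∀ w, D (z * w) = v * w + z * D w) (j : ℕ) (w : B) :
    D (z ^ j * w) = j • (v * z ^ (j - 1) * w) + z ^ j * D w := by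
  induction j with
  | zero => simp
  | succ j ih =>
    have hvzj : j • (z * (v * z ^ (j - 1))) = j • (v * z ^ j) := by
      cases j with
      | zero => simp
      | succ j => rw [← mul_assoc, ← hvz.eq, Nat.add_sub_cancel, mul_assoc, ← pow_succ']
    calc D (z ^ (j + 1) * w)
        = v * z ^ j * w + (j • (z * (v * z ^ (j - 1))) * w + z ^ (j + 1) * D w) := by
          rw [pow_succ', mul_assoc, hD, ih]
          simp only [mul_add, mul_assoc, mul_smul_comm, smul_mul_assoc]
      _ = (j + 1) • (v * z ^ j * w) + z ^ (j + 1) * D w := by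
          rw [hvzj, succ_nsmul, smul_mul_assoc]
          abel

end OddEvenOperators

section Berezin

variable {R : Type*} [CommRing R]

lemma contractLeft_ιMulti_mem {M : Type*} [AddCommGroup M] [Module R M] (α : Module.Dual R M)
    (k : ℕ) (v : Fin (k + 1) → M) :
    contractLeft α (ιMulti R (k + 1) v) ∈ ⋀[R]^k M := by
  induction k with
  | zero =>
    rw [ExteriorAlgebra.ιMulti_succ_apply, ExteriorAlgebra.ιMulti_zero_apply, contractLeft_ι_mul,
      contractLeft_one, mul_zero, sub_zero]
    exact Submodule.smul_mem _ _ (by simp)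
  | succ k ih =>
    rw [ExteriorAlgebra.ιMulti_succ_apply, contractLeft_ι_mul]
    refine Submodule.sub_mem _ (Submodule.smul_mem _ _
      (ExteriorAlgebra.ιMulti_range R _ ⟨_, rfl⟩)) ?_
    rw [ExteriorAlgebra.exteriorPower, pow_succ']
    exact Submodule.mul_mem_mul ⟨_, rfl⟩ (ih _)

variable (R) in
/-- The Berezin integral `Λ(R^N) → R`: the coefficient of `e₀ ∧ ⋯ ∧ e_{N-1}`. -/
def berezin (N : ℕ) : ExteriorAlgebra R (Fin N → R) →ₗ[R] R :=
  ExteriorAlgebra.liftAlternating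
    (Pi.single (M := fun k => (Fin N → R) [⋀^Fin k]→ₗ[R] R) N Matrix.detRowAlternating)

lemma berezin_ιMulti {N : ℕ} (v : Fin N → Fin N → R) :
    berezin R N (ιMulti R N v) = Matrix.det v := by
  rw [berezin, ExteriorAlgebra.liftAlternating_apply_ιMulti, Pi.single_eq_same]
  rfl

lemma berezin_eq_zero_of_mem {N k : ℕ} (hk : k ≠ N) {w : ExteriorAlgebra R (Fin N → R)}
    (hw : w ∈ ⋀[R]^k (Fin N → R)) : berezin R N w = 0 := by
  rw [← ExteriorAlgebra.ιMulti_span_fixedDegree] at hw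
  induction hw using Submodule.span_induction with
  | mem _ h =>
    obtain ⟨v, rfl⟩ := h
    rw [berezin, ExteriorAlgebra.liftAlternating_apply_ιMulti, Pi.single_eq_of_ne hk]
    rfl
  | zero => exact map_zero _
  | add _ _ _ _ hx hy => rw [map_add, hx, hy, add_zero]
  | smul r _ _ hx => rw [map_smul, hx, smul_zero]

lemma ιMulti_eq_zero_of_lt {N k : ℕ} (h : N < k) (v : Fin k → Fin N → R) :
    ιMulti R k v = 0 := by
  suffices ιMulti R k (M := Fin N → R) = 0 from DFunLike.congr_fun this v
  refine (Pi.basisFun R (Fin N)).ext_alternating fun f hf => absurd ?_ h.not_ge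
  simpa using Fintype.card_le_of_injective f hf

lemma berezin_contractLeft {N : ℕ} (α : Module.Dual R (Fin N → R))
    (w : ExteriorAlgebra R (Fin N → R)) : berezin R N (contractLeft α w) = 0 := by
  suffices berezin R N ∘ₗ contractLeft α = 0 from LinearMap.congr_fun this w
  ext k v
  change berezin R N (contractLeft α (ιMulti R k v)) = 0
  rcases k with - | k
  · simp
  by_cases hk : k = N
  · rw [ιMulti_eq_zero_of_lt (by omega), map_zero, map_zero]
  · exact berezin_eq_zero_of_mem hk (contractLeft_ιMulti_mem α k v)

end Berezin

section ExteriorForms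

variable (R A : Type*) [CommRing R] [Ring A] [Algebra R A] (N : ℕ)

/-- Elements of the exterior algebra of `R^N` with coefficients in the algebra of forms `A`. The
tensor product is the ungraded one: the generators `eᵢ` commute with `A`. -/
abbrev ExtForms : Type _ := A ⊗[R] ExteriorAlgebra R (Fin N → R)

variable {N}

/-- The standard generator `eᵢ` of the exterior algebra of `R^N`. -/
def frame (i : Fin N) : ExteriorAlgebra R (Fin N → R) := ι R (Pi.single i 1)

variable {A}

/-- The vector `∑ aᵢ eᵢ` with components `aᵢ ∈ A`. -/
def vec (a : Fin N → A) : ExtForms R A N := ∑ i, a i ⊗ₜ frame R i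

/-- The bivector `∑ Mᵢⱼ eᵢ ∧ eⱼ` with components `Mᵢⱼ ∈ A`. -/
def bivec (M : Matrix (Fin N) (Fin N) A) : ExtForms R A N :=
  ∑ i, ∑ j, M i j ⊗ₜ (frame R i * frame R j)

/-- Contraction `∑ aₖ ι(eₖ*)` with the components `aₖ` multiplied in from the left. -/
def contract (a : Fin N → A) : ExtForms R A N →ₗ[R] ExtForms R A N :=
  ∑ k, LinearMap.mulLeft R (a k ⊗ₜ 1) ∘ₗ
    LinearMap.lTensor A (contractLeft (LinearMap.proj k))

/-- The action `∑ ωᵢₖ eᵢ ∧ ι(eₖ*)` of a matrix of forms as a derivation of the exterior algebra. -/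
def matrixAction (ω : Matrix (Fin N) (Fin N) A) : ExtForms R A N →ₗ[R] ExtForms R A N :=
  ∑ i, LinearMap.mulLeft R (1 ⊗ₜ frame R i) ∘ₗ contract R (ω i)

variable {R}

lemma frame_mul_frame (i j : Fin N) : frame R i * frame R j = -(frame R j * frame R i) :=
  eq_neg_of_add_eq_zero_left (ExteriorAlgebra.ι_add_mul_swap _ _)

lemma contract_tmul (a : Fin N → A) (b : A) (w : ExteriorAlgebra R (Fin N → R)) :
    contract R a (b ⊗ₜ w) = ∑ k, (a k * b) ⊗ₜ contractLeft (LinearMap.proj k) w := by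
  simp [contract]

lemma contract_one (a : Fin N → A) : contract R a 1 = 0 := by
  simp [Algebra.TensorProduct.one_def, contract_tmul]

lemma matrixAction_apply (ω : Matrix (Fin N) (Fin N) A) (w : ExtForms R A N) :
    matrixAction R ω w = ∑ i, (1 ⊗ₜ frame R i) * contract R (ω i) w := by
  simp [matrixAction]

lemma vec_add (a b : Fin N → A) : vec R (a + b) = vec R a + vec R b := by
  simp [vec, TensorProduct.add_tmul, Finset.sum_add_distrib]

lemma bivec_sub (M M' : Matrix (Fin N) (Fin N) A) :
    bivec R (M - M') = bivec R M - bivec R M' := by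
  simp [bivec, TensorProduct.sub_tmul, Finset.sum_sub_distrib]

lemma vec_single_one (i : Fin N) : vec R (Pi.single i (1 : A)) = 1 ⊗ₜ frame R i := by
  rw [vec, Finset.sum_eq_single_of_mem i (Finset.mem_univ i)]
  · rw [Pi.single_eq_same]
  · intro k _ hk
    rw [Pi.single_eq_of_ne hk, TensorProduct.zero_tmul]

lemma vec_mul_vec (a b : Fin N → A) :
    vec R a * vec R b = bivec R (.of fun i j => a i * b j) := by
  simp [vec, bivec, Finset.sum_mul_sum]

lemma vec_mul_vec_of_commute {a b : Fin N → A} (h : ∀ i j, Commute (a i) (b j)) :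
    vec R a * vec R b = -(vec R b * vec R a) := by
  rw [vec_mul_vec, vec_mul_vec, bivec, bivec, Finset.sum_comm]
  simp [← Finset.sum_neg_distrib, (h _ _).eq, ← TensorProduct.tmul_neg, ← frame_mul_frame]

lemma bivec_transpose (M : Matrix (Fin N) (Fin N) A) : bivec R M.transpose = -bivec R M := by
  rw [bivec, bivec, Finset.sum_comm]
  simp [← Finset.sum_neg_distrib, ← TensorProduct.tmul_neg, ← frame_mul_frame]

lemma bivec_eq_sum_vec_mul (M : Matrix (Fin N) (Fin N) A) :
    bivec R M = ∑ j, vec R (M.col j) * (1 ⊗ₜ frame R j) := by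
  rw [bivec, Finset.sum_comm]
  simp [vec, Finset.sum_mul]

lemma commute_frame_mul_frame (i j : Fin N) (w : ExteriorAlgebra R (Fin N → R)) :
    Commute (frame R i * frame R j) w := by
  induction w using ExteriorAlgebra.induction with
  | algebraMap r => exact Algebra.commute_algebraMap_right r _
  | ι m =>
    have hswap (k : Fin N) : frame R k * ι R m = -(ι R m * frame R k) :=
      eq_neg_of_add_eq_zero_left (ExteriorAlgebra.ι_add_mul_swap _ _)
    rw [commute_iff_eq, mul_assoc, hswap j, mul_neg, ← mul_assoc, hswap i, neg_mul, neg_neg,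
      mul_assoc]
  | mul _ _ h₁ h₂ => exact h₁.mul_right h₂
  | add _ _ h₁ h₂ => exact h₁.add_right h₂

lemma commute_bivec {M : Matrix (Fin N) (Fin N) A} (hM : ∀ i j x, Commute (M i j) x)
    (w : ExtForms R A N) : Commute (bivec R M) w := by
  refine Commute.sum_left _ _ _ fun i _ => Commute.sum_left _ _ _ fun j _ => ?_
  induction w using TensorProduct.induction_on with
  | zero => exact Commute.zero_right _
  | add _ _ h₁ h₂ => exact h₁.add_right h₂
  | tmul c w =>
    rw [commute_iff_eq, Algebra.TensorProduct.tmul_mul_tmul, Algebra.TensorProduct.tmul_mul_tmul,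
      (hM i j c).eq, (commute_frame_mul_frame i j w).eq]

lemma contract_tmul_frame_mul (a : Fin N → A) {b : A} {ε : ℤ} (h : ∀ k, a k * b = ε • (b * a k))
    (i : Fin N) (w : ExtForms R A N) :
    contract R a ((b ⊗ₜ frame R i) * w) =
      ((a i * b) ⊗ₜ 1) * w - ε • ((b ⊗ₜ frame R i) * contract R a w) := by
  induction w using TensorProduct.induction_on with
  | zero => simp
  | add w₁ w₂ h₁ h₂ => simp only [mul_add, map_add, h₁, h₂, smul_add]; abel
  | tmul c w =>
    have hcomp (k : Fin N) : a k * (b * c) = ε • (b * (a k * c)) := by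
      rw [← mul_assoc, h, smul_mul_assoc, mul_assoc]
    have hpair (k : Fin N) : contractLeft (LinearMap.proj k) (frame R i * w) =
        (if k = i then w else 0) - frame R i * contractLeft (LinearMap.proj k) w := by
      rw [frame, ι, contractLeft_ι_mul]
      simp [Pi.single_apply]
    simp only [Algebra.TensorProduct.tmul_mul_tmul, contract_tmul, hpair, TensorProduct.tmul_sub,
      Finset.sum_sub_distrib, Finset.mul_sum, Finset.smul_sum, one_mul]
    congr 1
    · rw [Finset.sum_eq_single_of_mem i (Finset.mem_univ i) fun k _ hk => by simp [hk], if_pos rfl,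
        mul_assoc]
    · simp only [hcomp, TensorProduct.smul_tmul']

lemma contract_vec_mul {a b : Fin N → A} {ε : ℤ} (h : ∀ k i, a k * b i = ε • (b i * a k))
    (w : ExtForms R A N) :
    contract R a (vec R b * w) =
      ((∑ i, a i * b i) ⊗ₜ 1) * w - ε • (vec R b * contract R a w) := by
  simp only [vec, Finset.sum_mul, map_sum, contract_tmul_frame_mul a (h · _),
    Finset.sum_sub_distrib, TensorProduct.sum_tmul, Finset.smul_sum]

lemma contract_frame_mul (a : Fin N → A) (i : Fin N) (w : ExtForms R A N) :
    contract R a ((1 ⊗ₜ frame R i) * w) = (a i ⊗ₜ 1) * w - (1 ⊗ₜ frame R i) * contract R a w := by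
  simpa using contract_tmul_frame_mul a (b := 1) (ε := 1) (by simp) i w

lemma contract_bivec_mul {M : Matrix (Fin N) (Fin N) A} (hskew : ∀ i j, M i j = -M j i)
    (hM : ∀ i j x, Commute (M i j) x) (a : Fin N → A) (w : ExtForms R A N) :
    contract R a (bivec R M * w) =
      -(2 • vec R (M.mulVec a)) * w + bivec R M * contract R a w := by
  have hfirst : ∑ i, ∑ j, (a i * M i j) ⊗ₜ[R] frame R j = -vec R (M.mulVec a) := by
    rw [Finset.sum_comm]
    simp only [vec, Matrix.mulVec, dotProduct, TensorProduct.sum_tmul, ← Finset.sum_neg_distrib,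
      ← TensorProduct.neg_tmul]
    exact Finset.sum_congr rfl fun j _ => Finset.sum_congr rfl fun i _ => by
      rw [← (hM i j (a i)).eq, hskew, neg_mul]
  have hsecond : ∑ i, ∑ j, (M i j * a j) ⊗ₜ[R] frame R i = vec R (M.mulVec a) := by
    simp only [vec, Matrix.mulVec, dotProduct, TensorProduct.sum_tmul]
  have hterm (i j : Fin N) : contract R a (M i j ⊗ₜ (frame R i * frame R j) * w) =
      (a i * M i j) ⊗ₜ frame R j * w - (M i j * a j) ⊗ₜ frame R i * w +
        M i j ⊗ₜ (frame R i * frame R j) * contract R a w := by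
    have hsplit : M i j ⊗ₜ[R] (frame R i * frame R j) = M i j ⊗ₜ frame R i * (1 ⊗ₜ frame R j) := by
      simp
    rw [hsplit, mul_assoc,
      contract_tmul_frame_mul a (ε := 1) (fun k => by rw [one_smul, (hM i j (a k)).eq]),
      contract_frame_mul]
    simp only [one_smul, mul_sub, ← mul_assoc, Algebra.TensorProduct.tmul_mul_tmul, one_mul,
      mul_one]
    abel
  calc contract R a (bivec R M * w)
      = (∑ i, ∑ j, (a i * M i j) ⊗ₜ frame R j) * w - (∑ i, ∑ j, (M i j * a j) ⊗ₜ frame R i) * w +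
          bivec R M * contract R a w := by
        simp only [bivec, Finset.sum_mul, map_sum, hterm, Finset.sum_add_distrib,
          Finset.sum_sub_distrib]
    _ = _ := by
        rw [hfirst, hsecond, two_smul, neg_mul, neg_mul, add_mul]
        abel

lemma matrixAction_one (ω : Matrix (Fin N) (Fin N) A) : matrixAction R ω 1 = 0 := by
  simp [matrixAction_apply, contract_one]

lemma frame_mul_vec (i : Fin N) (a : Fin N → A) :
    (1 ⊗ₜ frame R i) * vec R a = -(vec R a * (1 ⊗ₜ frame R i)) := by
  rw [← vec_single_one]
  refine vec_mul_vec_of_commute fun k l => ?_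
  obtain rfl | hk := eq_or_ne k i
  · rw [Pi.single_eq_same]
    exact Commute.one_left _
  · rw [Pi.single_eq_of_ne hk]
    exact Commute.zero_left _

lemma matrixAction_vec_mul {ω : Matrix (Fin N) (Fin N) A} {b : Fin N → A} {ε : ℤ}
    (h : ∀ i k l, ω i k * b l = ε • (b l * ω i k)) (w : ExtForms R A N) :
    matrixAction R ω (vec R b * w) =
      vec R (ω.mulVec b) * w + ε • (vec R b * matrixAction R ω w) := by
  have hterm (i : Fin N) : (1 ⊗ₜ frame R i) * contract R (ω i) (vec R b * w) =
      (ω.mulVec b i ⊗ₜ frame R i) * w +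
        ε • (vec R b * ((1 ⊗ₜ frame R i) * contract R (ω i) w)) := by
    rw [contract_vec_mul (h i), mul_sub, mul_smul_comm, ← mul_assoc, ← mul_assoc, frame_mul_vec,
      Algebra.TensorProduct.tmul_mul_tmul, one_mul, mul_one, neg_mul, smul_neg, sub_neg_eq_add,
      mul_assoc]
    rfl
  have hvec : vec R (ω.mulVec b) = ∑ i, ω.mulVec b i ⊗ₜ frame R i := rfl
  rw [matrixAction_apply, matrixAction_apply, Finset.mul_sum, Finset.smul_sum, hvec,
    Finset.sum_mul, ← Finset.sum_add_distrib]
  exact Finset.sum_congr rfl fun i _ => hterm i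

lemma matrixAction_bivec_mul {M ω : Matrix (Fin N) (Fin N) A} (hskew : ∀ i j, M i j = -M j i)
    (hM : ∀ i j x, Commute (M i j) x) (w : ExtForms R A N) :
    matrixAction R ω (bivec R M * w) =
      2 • bivec R (M * ω.transpose) * w + bivec R M * matrixAction R ω w := by
  have hterm (i : Fin N) : (1 ⊗ₜ frame R i) * contract R (ω i) (bivec R M * w) =
      2 • (vec R (M.mulVec (ω i)) * (1 ⊗ₜ frame R i)) * w +
        bivec R M * ((1 ⊗ₜ frame R i) * contract R (ω i) w) := by
    rw [contract_bivec_mul hskew hM, mul_add, ← mul_assoc, ← mul_assoc,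
      ← (commute_bivec hM (1 ⊗ₜ frame R i)).eq, mul_neg, mul_smul_comm, frame_mul_vec, smul_neg,
      neg_neg, mul_assoc (bivec R M)]
  rw [matrixAction_apply, matrixAction_apply, Finset.mul_sum, bivec_eq_sum_vec_mul (M * _),
    Finset.smul_sum, Finset.sum_mul, ← Finset.sum_add_distrib]
  exact Finset.sum_congr rfl fun i _ => hterm i

end ExteriorForms

section TopCoeff

variable {R A : Type*} [CommRing R] [Ring A] [Algebra R A] {N : ℕ}

variable (R A N) in
/-- The Berezin integral with coefficients in `A`. -/
def topCoeff : ExtForms R A N →ₗ[R] A :=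
  (TensorProduct.rid R A).toLinearMap ∘ₗ LinearMap.lTensor A (berezin R N)

lemma topCoeff_tmul (a : A) (w : ExteriorAlgebra R (Fin N → R)) :
    topCoeff R A N (a ⊗ₜ w) = berezin R N w • a := by
  simp [topCoeff]

lemma topCoeff_tmul_one_mul (a : A) (w : ExtForms R A N) :
    topCoeff R A N ((a ⊗ₜ 1) * w) = a * topCoeff R A N w := by
  induction w using TensorProduct.induction_on with
  | zero => simp
  | add _ _ h₁ h₂ => rw [mul_add, map_add, map_add, mul_add, h₁, h₂]
  | tmul c w => simp [topCoeff_tmul]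

lemma topCoeff_rTensor (d : A →ₗ[R] A) (w : ExtForms R A N) :
    topCoeff R A N (d.rTensor _ w) = d (topCoeff R A N w) := by
  induction w using TensorProduct.induction_on with
  | zero => simp
  | add _ _ h₁ h₂ => rw [map_add, map_add, map_add, map_add, h₁, h₂]
  | tmul c w => simp [topCoeff_tmul]

lemma topCoeff_contract (a : Fin N → A) (w : ExtForms R A N) :
    topCoeff R A N (contract R a w) = 0 := by
  induction w using TensorProduct.induction_on with
  | zero => simp
  | add _ _ h₁ h₂ => rw [map_add, map_add, h₁, h₂, add_zero]
  | tmul c w => simp [contract_tmul, topCoeff_tmul, berezin_contractLeft]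

lemma topCoeff_matrixAction (ω : Matrix (Fin N) (Fin N) A) (w : ExtForms R A N) :
    topCoeff R A N (matrixAction R ω w) = ω.trace * topCoeff R A N w := by
  have hterm (i : Fin N) : topCoeff R A N ((1 ⊗ₜ frame R i) * contract R (ω i) w) =
      ω i i * topCoeff R A N w := by
    rw [← sub_sub_cancel ((ω i i ⊗ₜ 1) * w) ((1 ⊗ₜ frame R i) * _), ← contract_frame_mul, map_sub,
      topCoeff_contract, sub_zero, topCoeff_tmul_one_mul]
  simp only [matrixAction_apply, map_sum, hterm, Matrix.trace, Matrix.diag, Finset.sum_mul]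

-- `contract a` is a homotopy for `a ∧ ·`, and its values have no top-degree part.
lemma topCoeff_eq_topCoeff_vec_mul_contract {a : Fin N → A} (ha : ∀ i j, Commute (a i) (a j))
    (hunit : ∑ i, a i * a i = 1) (w : ExtForms R A N) :
    topCoeff R A N w = topCoeff R A N (vec R a * contract R a w) := by
  have hsplit := contract_vec_mul (R := R) (ε := 1) (fun i j => by rw [one_smul, (ha i j).eq]) w
  rw [hunit, ← Algebra.TensorProduct.one_def, one_mul, one_smul] at hsplit
  rw [← sub_eq_zero, ← map_sub, ← hsplit, topCoeff_contract]

end TopCoeff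

section Expansion

variable {R A : Type*} [CommRing R] [Ring A] [Algebra R A] {N : ℕ}

variable (R) in
/-- The `k`-vector `∑ F(f) e_{f(0)} ∧ ⋯ ∧ e_{f(k-1)}`, summed over all multi-indices `f`. -/
def multivec (k : ℕ) (F : (Fin k → Fin N) → A) : ExtForms R A N :=
  ∑ f, F f ⊗ₜ ιMulti R k fun i => Pi.single (f i) (1 : R)

lemma multivec_mul_multivec {k l : ℕ} (F : (Fin k → Fin N) → A) (G : (Fin l → Fin N) → A) :
    multivec R k F * multivec R l G =
      multivec R (k + l) fun f => F (f ∘ Fin.castAdd l) * G (f ∘ Fin.natAdd k) := by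
  simp only [multivec, Finset.sum_mul_sum, ← Finset.sum_product',
    Algebra.TensorProduct.tmul_mul_tmul, ExteriorAlgebra.ιMulti_mul_ιMulti]
  refine Fintype.sum_equiv (Fin.appendEquiv k l) _ _ fun p => ?_
  have hleft : Fin.append p.1 p.2 ∘ Fin.castAdd l = p.1 := funext fun i => Fin.append_left _ _ i
  have hright : Fin.append p.1 p.2 ∘ Fin.natAdd k = p.2 := funext fun i => Fin.append_right _ _ i
  have hindex : (fun i => Pi.single (Fin.append p.1 p.2 i) (1 : R)) =
      Fin.append (fun i => Pi.single (p.1 i) 1) fun i => Pi.single (p.2 i) 1 := by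
    ext i : 1
    refine Fin.addCases (fun i => ?_) (fun i => ?_) i <;> simp
  change _ = (F (Fin.append p.1 p.2 ∘ _) * G (Fin.append p.1 p.2 ∘ _)) ⊗ₜ ιMulti R (k + l) _
  rw [hleft, hright]
  exact congrArg _ (congrArg _ hindex.symm)

lemma multivec_cast {k l : ℕ} (h : k = l) (F : (Fin k → Fin N) → A) :
    multivec R k F = multivec R l fun f => F (f ∘ Fin.cast h) := by
  subst h
  rfl

lemma vec_eq_multivec (a : Fin N → A) : vec R a = multivec R 1 fun f => a (f 0) := by
  refine Fintype.sum_equiv (Equiv.funUnique (Fin 1) (Fin N)).symm _ _ fun i => ?_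
  simp [frame]

lemma bivec_eq_multivec (M : Matrix (Fin N) (Fin N) A) :
    bivec R M = multivec R 2 fun f => M (f 0) (f 1) := by
  rw [bivec, ← Finset.sum_product', Finset.univ_product_univ]
  refine Fintype.sum_equiv (finTwoArrowEquiv (Fin N)).symm _ _ fun p => ?_
  rw [ExteriorAlgebra.ιMulti_succ_apply, ExteriorAlgebra.ιMulti_succ_apply,
    ExteriorAlgebra.ιMulti_zero_apply, mul_one]
  rfl

lemma one_eq_multivec : (1 : ExtForms R A N) = multivec R 0 fun _ => 1 := by
  simp [multivec, Algebra.TensorProduct.one_def]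

lemma vec_pow (a : Fin N → A) (m : ℕ) :
    vec R a ^ m = multivec R m fun f => (List.ofFn fun i => a (f i)).prod := by
  induction m with
  | zero => simp [one_eq_multivec]
  | succ m ih =>
    rw [pow_succ, ih, vec_eq_multivec, multivec_mul_multivec]
    simp only [List.ofFn_succ', List.concat_eq_append, List.prod_append,
      List.prod_singleton]
    rfl

lemma bivec_pow (M : Matrix (Fin N) (Fin N) A) (j : ℕ) :
    bivec R M ^ j = multivec R (2 * j) fun f =>
      (List.ofFn fun t : Fin j => M (f ⟨2 * t, by omega⟩) (f ⟨2 * t + 1, by omega⟩)).prod := by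
  induction j with
  | zero => simp [one_eq_multivec]
  | succ j ih =>
    rw [pow_succ, ih, bivec_eq_multivec, multivec_mul_multivec]
    simp only [List.ofFn_succ', List.concat_eq_append, List.prod_append,
      List.prod_singleton]
    rfl

lemma topCoeff_multivec (F : (Fin N → Fin N) → A) :
    topCoeff R A N (multivec R N F) = ∑ τ : Equiv.Perm (Fin N), (Equiv.Perm.sign τ : ℤ) • F τ := by
  have hdet (τ : Equiv.Perm (Fin N)) : Matrix.det (fun i => Pi.single (τ i) (1 : R)) =
      (Equiv.Perm.sign τ : ℤ) := by
    have hrows : (fun i => Pi.single (τ i) (1 : R)) = (1 : Matrix _ _ R).submatrix τ id := by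
      ext i k
      simp [Matrix.one_apply, Pi.single_apply, eq_comm]
    rw [hrows, Matrix.det_permute, Matrix.det_one, mul_one]
  have hzero (f : Fin N → Fin N) (hf : f ∉ Set.range ((⇑) : Equiv.Perm (Fin N) → _)) :
      Matrix.det (fun i => Pi.single (f i) (1 : R)) = 0 := by
    have hinj : ¬ Function.Injective f := fun h =>
      hf ⟨Equiv.ofBijective f (Finite.injective_iff_bijective.1 h), rfl⟩
    simp only [Function.Injective, not_forall] at hinj
    obtain ⟨i, k, hik, hne⟩ := hinj
    exact Matrix.det_zero_of_row_eq hne (by simp only [hik])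
  simp only [multivec, map_sum, topCoeff_tmul, berezin_ιMulti]
  refine (Fintype.sum_of_injective _ DFunLike.coe_injective _ _ (fun f hf => ?_) fun τ => ?_).symm
  · rw [hzero f hf, zero_smul]
  · rw [hdet, Int.cast_smul_eq_zsmul]

lemma psiJ_eq_topCoeff (n : ℕ) (u θ : Fin (n + 1) → A) (Ω : Matrix (Fin (n + 1)) (Fin (n + 1)) A)
    (j : ℕ) (hj : 2 * j ≤ n) :
    psiJ n u θ Ω j hj = topCoeff R A (n + 1) (vec R u * vec R θ ^ (n - 2 * j) * bivec R Ω ^ j) := by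
  have hdeg : 1 + (n - 2 * j) + 2 * j = n + 1 := by omega
  rw [vec_pow, bivec_pow, vec_eq_multivec, multivec_mul_multivec, multivec_mul_multivec,
    multivec_cast hdeg, topCoeff_multivec]
  refine Finset.sum_congr rfl fun τ _ => ?_
  have hu : Fin.cast hdeg (Fin.castAdd _ (Fin.castAdd _ 0)) = 0 := rfl
  have hθ (i : Fin (n - 2 * j)) :
      Fin.cast hdeg (Fin.castAdd _ (Fin.natAdd 1 i)) = ⟨i + 1, by omega⟩ :=
    Fin.ext (Nat.add_comm _ _)
  have hΩ (i : ℕ) (hi : i < 2 * j) :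
      Fin.cast hdeg (Fin.natAdd _ ⟨i, hi⟩) = ⟨n - 2 * j + 1 + i, by omega⟩ :=
    Fin.ext (congrArg (· + i) (Nat.add_comm _ _))
  simp only [Function.comp_apply, hu, hθ, hΩ, ← add_assoc]
  simp only [add_right_comm _ _ 1]

end Expansion

section CovDeriv

variable {R A : Type*} [CommRing R] [Ring A] [Algebra R A] {N : ℕ} {d : A →ₗ[R] A}
  {ω : Matrix (Fin N) (Fin N) A}

lemma rTensor_tmul_mul {b : A} {ε : ℤ} (h : ∀ x, d (b * x) = d b * x + ε • (b * d x))
    (e : ExteriorAlgebra R (Fin N → R)) (w : ExtForms R A N) :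
    d.rTensor _ ((b ⊗ₜ e) * w) = (d b ⊗ₜ e) * w + ε • ((b ⊗ₜ e) * d.rTensor _ w) := by
  induction w using TensorProduct.induction_on with
  | zero => simp
  | add _ _ h₁ h₂ => simp only [mul_add, map_add, h₁, h₂, smul_add]; abel
  | tmul c w => simp [h, TensorProduct.add_tmul, TensorProduct.smul_tmul']

variable (d ω) in
/-- The covariant derivative `∇ = d + ω` on the exterior algebra with coefficients in `A`. -/
def covDeriv : ExtForms R A N →ₗ[R] ExtForms R A N := d.rTensor _ + matrixAction R ω

lemma covDeriv_one (hd : d 1 = 0) : covDeriv d ω 1 = 0 := by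
  rw [covDeriv, LinearMap.add_apply, matrixAction_one, Algebra.TensorProduct.one_def,
    LinearMap.rTensor_tmul, hd, TensorProduct.zero_tmul, add_zero]

lemma covDeriv_vec_mul {b : Fin N → A} {ε : ℤ}
    (hd : ∀ i x, d (b i * x) = d (b i) * x + ε • (b i * d x))
    (hω : ∀ i k l, ω i k * b l = ε • (b l * ω i k)) (w : ExtForms R A N) :
    covDeriv d ω (vec R b * w) =
      vec R (d ∘ b + ω.mulVec b) * w + ε • (vec R b * covDeriv d ω w) := by
  have hvec : d.rTensor _ (vec R b * w) = vec R (d ∘ b) * w + ε • (vec R b * d.rTensor _ w) := by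
    simp only [vec, Finset.sum_mul, map_sum, rTensor_tmul_mul (hd _), Finset.sum_add_distrib,
      Finset.smul_sum, Function.comp_apply]
  simp only [covDeriv, LinearMap.add_apply, hvec, matrixAction_vec_mul hω, vec_add, add_mul,
    mul_add, smul_add]
  abel

lemma covDeriv_bivec_mul {M : Matrix (Fin N) (Fin N) A} (hskew : ∀ i j, M i j = -M j i)
    (hM : ∀ i j x, Commute (M i j) x)
    (hd : ∀ i j x, d (M i j * x) = d (M i j) * x + M i j * d x) (w : ExtForms R A N) :
    covDeriv d ω (bivec R M * w) =
      (bivec R (M.map d) + 2 • bivec R (M * ω.transpose)) * w + bivec R M * covDeriv d ω w := by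
  have hbivec : d.rTensor _ (bivec R M * w) =
      bivec R (M.map d) * w + bivec R M * d.rTensor _ w := by
    have hd' (i j : Fin N) (x : A) : d (M i j * x) = d (M i j) * x + (1 : ℤ) • (M i j * d x) := by
      rw [one_smul, hd]
    simp only [bivec, Finset.sum_mul, map_sum, Matrix.map_apply, ← Finset.sum_add_distrib,
      rTensor_tmul_mul (hd' _ _), one_smul]
  simp only [covDeriv, LinearMap.add_apply, hbivec, matrixAction_bivec_mul hskew hM, add_mul,
    mul_add]
  abel

lemma map_topCoeff_eq_topCoeff_covDeriv (hω : ω.trace = 0) (w : ExtForms R A N) :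
    d (topCoeff R A N w) = topCoeff R A N (covDeriv d ω w) := by
  rw [covDeriv, LinearMap.add_apply, map_add, topCoeff_rTensor, topCoeff_matrixAction, hω, zero_mul,
    add_zero]

end CovDeriv

section EulerForm

variable {R A : Type*} [CommRing R] [Ring A] [Algebra R A] {N : ℕ}

variable (R) in
/-- The Euler form of the curvature matrix `Ω`, i.e. its Pfaffian up to normalisation. -/
def eulerForm (Ω : Matrix (Fin N) (Fin N) A) : A := topCoeff R A N (bivec R Ω ^ (N / 2))

lemma eulerForm_eq_zero_of_mulVec_eq_zero {Ω : Matrix (Fin N) (Fin N) A}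
    (hskew : ∀ i j, Ω i j = -Ω j i) (hΩ : ∀ i j x, Commute (Ω i j) x) {a : Fin N → A}
    (ha : ∀ i j, Commute (a i) (a j)) (hunit : ∑ i, a i * a i = 1) (hΩa : Ω.mulVec a = 0) :
    eulerForm R Ω = 0 := by
  have hcontract (w : ExtForms R A N) :
      contract R a (bivec R Ω * w) = 0 * w + bivec R Ω * contract R a w := by
    simp [contract_bivec_mul hskew hΩ, hΩa, vec]
  have hpow : contract R a (bivec R Ω ^ (N / 2) * 1) = 0 := by
    refine (map_pow_mul_of_derivation (D := (contract R a).toAddMonoidHom)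
      (Commute.zero_left _) hcontract (N / 2) 1).trans ?_
    simp [contract_one]
  rw [eulerForm, topCoeff_eq_topCoeff_vec_mul_contract ha hunit, ← mul_one (_ ^ _), hpow, mul_zero,
    map_zero]

lemma eulerForm_eq_zero_of_col_eq_zero {Ω : Matrix (Fin N) (Fin N) A}
    (hskew : ∀ i j, Ω i j = -Ω j i) (hΩ : ∀ i j x, Commute (Ω i j) x) {k : Fin N}
    (hcol : Ω.col k = 0) : eulerForm R Ω = 0 := by
  refine eulerForm_eq_zero_of_mulVec_eq_zero hskew hΩ (a := Pi.single k 1) (fun i j => ?_) ?_ ?_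
  · rcases eq_or_ne i k with rfl | hi <;> simp [*]
  · simp [Pi.single_apply]
  · rw [Matrix.mulVec_single_one, hcol]

end EulerForm

section SphereBundle

variable {R A : Type*} [CommRing R] [Ring A] [Algebra R A] {N : ℕ}

/-- The structure equations of the unit sphere bundle of a rank `N` bundle with metric connection,
in a local orthonormal frame: `d` is the exterior differential on the algebra of forms `A`, `u` the
tautological section, `θ = du + ωu` its covariant derivative, `ω` the connection matrix and `Ω` the
curvature matrix. `A` is not assumed graded, so the graded rules are required of the generators. -/
structure IsSphereBundleCalculus (d : A →ₗ[R] A) (u θ : Fin N → A)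
    (ω Ω : Matrix (Fin N) (Fin N) A) : Prop where
  θ_eq (i : Fin N) : θ i = d (u i) + ∑ j, ω i j * u j
  Ω_eq (i j : Fin N) : Ω i j = d (ω i j) + ∑ k, ω i k * ω k j
  ω_skew (i j : Fin N) : ω i j = -ω j i
  unit : ∑ i, u i * u i = 1
  u_comm (i : Fin N) (x : A) : Commute (u i) x
  Ω_comm (i j : Fin N) (x : A) : Commute (Ω i j) x
  θ_mul_ω (i j k : Fin N) : θ i * ω j k = -(ω j k * θ i)
  ω_mul_ω (i j k l : Fin N) : ω i j * ω k l = -(ω k l * ω i j)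
  d_d (x : A) : d (d x) = 0
  d_u_mul (i : Fin N) (x : A) : d (u i * x) = d (u i) * x + u i * d x
  d_θ_mul (i : Fin N) (x : A) : d (θ i * x) = d (θ i) * x - θ i * d x
  d_ω_mul (i j : Fin N) (x : A) : d (ω i j * x) = d (ω i j) * x - ω i j * d x
  d_Ω_mul (i j : Fin N) (x : A) : d (Ω i j * x) = d (Ω i j) * x + Ω i j * d x

namespace IsSphereBundleCalculus

variable {d : A →ₗ[R] A} {u θ : Fin N → A} {ω Ω : Matrix (Fin N) (Fin N) A}

lemma d_one (H : IsSphereBundleCalculus d u θ ω Ω) : d 1 = 0 := by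
  have hu (i : Fin N) : u i * d 1 = 0 := by simpa using H.d_u_mul i 1
  calc d 1 = (∑ i, u i * u i) * d 1 := by rw [H.unit, one_mul]
    _ = 0 := by simp only [Finset.sum_mul, mul_assoc, hu, mul_zero, Finset.sum_const_zero]

lemma Ω_skew (H : IsSphereBundleCalculus d u θ ω Ω) (i j : Fin N) : Ω i j = -Ω j i := by
  have hωω (k : Fin N) : ω i k * ω k j = -(ω j k * ω k i) := by
    rw [H.ω_mul_ω, H.ω_skew k j, H.ω_skew i k, neg_mul_neg]
  rw [H.Ω_eq, H.Ω_eq j i, H.ω_skew i j, map_neg, neg_add, ← Finset.sum_neg_distrib]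
  simp only [hωω]

lemma d_comp_u (H : IsSphereBundleCalculus d u θ ω Ω) : d ∘ u = θ - ω.mulVec u :=
  funext fun i => eq_sub_of_add_eq (H.θ_eq i).symm

lemma map_d_ω (H : IsSphereBundleCalculus d u θ ω Ω) : ω.map d = Ω - ω * ω :=
  Matrix.ext fun i j => eq_sub_of_add_eq (H.Ω_eq i j).symm

lemma d_comp_θ (H : IsSphereBundleCalculus d u θ ω Ω) : d ∘ θ = Ω.mulVec u - ω.mulVec θ := by
  have hleibniz : d ∘ ω.mulVec u = (ω.map d).mulVec u - ω.mulVec (d ∘ u) := by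
    ext i
    simp [Matrix.mulVec, dotProduct, H.d_ω_mul]
  have hθ : θ = d ∘ u + ω.mulVec u := funext H.θ_eq
  calc d ∘ θ = d ∘ ω.mulVec u := by
        rw [hθ]
        ext i
        simp [H.d_d]
    _ = (Ω - ω * ω).mulVec u - ω.mulVec (θ - ω.mulVec u) := by
        rw [hleibniz, H.map_d_ω, H.d_comp_u]
    _ = Ω.mulVec u - ω.mulVec θ := by
        rw [Matrix.sub_mulVec, Matrix.mulVec_sub, Matrix.mulVec_mulVec]
        abel

lemma bianchi (H : IsSphereBundleCalculus d u θ ω Ω) : Ω.map d = Ω * ω - ω * Ω := by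
  have hleibniz : (ω * ω).map d = ω.map d * ω - ω * ω.map d := by
    ext i j
    simp [Matrix.mul_apply, H.d_ω_mul]
  calc Ω.map d = (ω * ω).map d := by
        ext i j
        simp [H.Ω_eq, H.d_d, Matrix.mul_apply]
    _ = Ω * ω - ω * Ω := by
        rw [hleibniz, H.map_d_ω]
        noncomm_ring

lemma map_d_Ω (H : IsSphereBundleCalculus d u θ ω Ω) :
    Ω.map d = (Ω * ω.transpose).transpose - Ω * ω.transpose := by
  have hω : ω.transpose = -ω := Matrix.ext fun i j => H.ω_skew j i
  have htranspose : (Ω * ω).transpose = ω * Ω := by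
    ext i j
    simp only [Matrix.transpose_apply, Matrix.mul_apply]
    refine Finset.sum_congr rfl fun k _ => ?_
    rw [H.Ω_skew, H.ω_skew, neg_mul_neg, (H.Ω_comm k j _).eq]
  rw [H.bianchi, hω, mul_neg, Matrix.transpose_neg, htranspose]
  abel

lemma trace_ω_eq_zero [IsAddTorsionFree A] (H : IsSphereBundleCalculus d u θ ω Ω) : ω.trace = 0 :=
  Finset.sum_eq_zero fun i _ => self_eq_neg.1 (H.ω_skew i i)

lemma sum_u_mul_θ_eq_zero [IsAddTorsionFree A] (H : IsSphereBundleCalculus d u θ ω Ω) :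
    ∑ i, u i * θ i = 0 := by
  have hdu : ∑ i, u i * d (u i) = 0 := by
    have hd (i : Fin N) : d (u i * u i) = 2 • (u i * d (u i)) := by
      rw [H.d_u_mul, ← (H.u_comm i _).eq, two_smul]
    have hsum := congrArg d H.unit
    rw [H.d_one, map_sum, Finset.sum_congr rfl fun i _ => hd i, ← Finset.smul_sum] at hsum
    exact (nsmul_eq_zero_iff_right two_ne_zero).1 hsum
  have hω : ∑ i, ∑ j, u i * (ω i j * u j) = 0 := by
    refine self_eq_neg.1 ?_
    conv_lhs => rw [Finset.sum_comm]
    simp only [← Finset.sum_neg_distrib]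
    refine Finset.sum_congr rfl fun i _ => Finset.sum_congr rfl fun j _ => ?_
    rw [H.ω_skew j i, neg_mul, mul_neg, (H.u_comm j _).eq, (H.u_comm i _).eq, mul_assoc, mul_assoc,
      (H.u_comm i (u j)).eq]
  simp only [H.θ_eq, mul_add, Finset.sum_add_distrib, Finset.mul_sum, hdu, hω, add_zero]

lemma commute_mulVec (H : IsSphereBundleCalculus d u θ ω Ω) (i : Fin N) (x : A) :
    Commute (Ω.mulVec u i) x := by
  rw [Matrix.mulVec, dotProduct]
  exact Commute.sum_left _ _ _ fun k _ => (H.Ω_comm i k x).mul_left (H.u_comm k x)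

lemma covDeriv_vec_u_mul (H : IsSphereBundleCalculus d u θ ω Ω) (w : ExtForms R A N) :
    covDeriv d ω (vec R u * w) = vec R θ * w + vec R u * covDeriv d ω w := by
  have hd (i : Fin N) (x : A) : d (u i * x) = d (u i) * x + (1 : ℤ) • (u i * d x) := by
    rw [one_smul, H.d_u_mul]
  have hω (i k l : Fin N) : ω i k * u l = (1 : ℤ) • (u l * ω i k) := by
    rw [one_smul, (H.u_comm l _).eq]
  rw [covDeriv_vec_mul hd hω, H.d_comp_u, sub_add_cancel, one_smul]

lemma covDeriv_vec_θ_mul (H : IsSphereBundleCalculus d u θ ω Ω) (w : ExtForms R A N) :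
    covDeriv d ω (vec R θ * w) = vec R (Ω.mulVec u) * w - vec R θ * covDeriv d ω w := by
  have hd (i : Fin N) (x : A) : d (θ i * x) = d (θ i) * x + (-1 : ℤ) • (θ i * d x) := by
    rw [neg_one_smul, H.d_θ_mul, sub_eq_add_neg]
  have hω (i k l : Fin N) : ω i k * θ l = (-1 : ℤ) • (θ l * ω i k) := by
    rw [neg_one_smul, H.θ_mul_ω, neg_neg]
  rw [covDeriv_vec_mul hd hω, H.d_comp_θ, sub_add_cancel, neg_one_smul, sub_eq_add_neg]

lemma covDeriv_bivec_Ω_mul (H : IsSphereBundleCalculus d u θ ω Ω) (w : ExtForms R A N) :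
    covDeriv d ω (bivec R Ω * w) = bivec R Ω * covDeriv d ω w := by
  rw [covDeriv_bivec_mul H.Ω_skew H.Ω_comm H.d_Ω_mul, H.map_d_Ω, bivec_sub, bivec_transpose,
    two_smul]
  noncomm_ring

lemma covDeriv_bivec_Ω_pow_eq_zero (H : IsSphereBundleCalculus d u θ ω Ω) (j : ℕ) :
    covDeriv d ω (bivec R Ω ^ j) = 0 := by
  induction j with
  | zero => rw [pow_zero, covDeriv_one H.d_one]
  | succ j ih => rw [pow_succ', H.covDeriv_bivec_Ω_mul, ih, mul_zero]

lemma vec_mulVec_mul_vec_θ (H : IsSphereBundleCalculus d u θ ω Ω) :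
    vec R (Ω.mulVec u) * vec R θ = -(vec R θ * vec R (Ω.mulVec u)) :=
  vec_mul_vec_of_commute fun i j => H.commute_mulVec i (θ j)

lemma d_topCoeff_vec_u_mul_pow_mul_pow [IsAddTorsionFree A]
    (H : IsSphereBundleCalculus d u θ ω Ω) (m j : ℕ) :
    d (topCoeff R A N (vec R u * vec R θ ^ m * bivec R Ω ^ j)) =
      topCoeff R A N (vec R θ ^ (m + 1) * bivec R Ω ^ j) +
        m • topCoeff R A N
          (vec R u * vec R (Ω.mulVec u) * vec R θ ^ (m - 1) * bivec R Ω ^ j) := by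
  have hpow : covDeriv d ω (vec R θ ^ m * bivec R Ω ^ j) =
      m • (vec R (Ω.mulVec u) * vec R θ ^ (m - 1) * bivec R Ω ^ j) +
        (-vec R θ) ^ m * covDeriv d ω (bivec R Ω ^ j) :=
    map_pow_mul_of_antiderivation (D := (covDeriv d ω).toAddMonoidHom) H.vec_mulVec_mul_vec_θ
      H.covDeriv_vec_θ_mul m _
  rw [map_topCoeff_eq_topCoeff_covDeriv H.trace_ω_eq_zero, mul_assoc, H.covDeriv_vec_u_mul, hpow,
    H.covDeriv_bivec_Ω_pow_eq_zero, mul_zero, add_zero, mul_smul_comm, map_add, map_nsmul,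
    pow_succ']
  simp only [mul_assoc]

lemma contract_u_vec_θ_mul [IsAddTorsionFree A] (H : IsSphereBundleCalculus d u θ ω Ω)
    (w : ExtForms R A N) : contract R u (vec R θ * w) = -(vec R θ * contract R u w) := by
  have hcomm (k i : Fin N) : u k * θ i = (1 : ℤ) • (θ i * u k) := by
    rw [one_smul, (H.u_comm k _).eq]
  rw [contract_vec_mul hcomm, H.sum_u_mul_θ_eq_zero, TensorProduct.zero_tmul, zero_mul, one_smul,
    zero_sub]

lemma contract_u_vec_θ_pow_mul [IsAddTorsionFree A] (H : IsSphereBundleCalculus d u θ ω Ω) (m : ℕ)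
    (w : ExtForms R A N) : contract R u (vec R θ ^ m * w) = (-vec R θ) ^ m * contract R u w := by
  induction m with
  | zero => simp
  | succ m ih =>
    rw [pow_succ', mul_assoc, H.contract_u_vec_θ_mul, ih, pow_succ' (-vec R θ), neg_mul, neg_mul,
      mul_assoc]

lemma contract_u_bivec_Ω_pow (H : IsSphereBundleCalculus d u θ ω Ω) (j : ℕ) :
    contract R u (bivec R Ω ^ j) = -((2 * j) • (vec R (Ω.mulVec u) * bivec R Ω ^ (j - 1))) := by
  have hpow : contract R u (bivec R Ω ^ j * 1) =
      j • (-(2 • vec R (Ω.mulVec u)) * bivec R Ω ^ (j - 1) * 1) +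
        bivec R Ω ^ j * contract R u 1 :=
    map_pow_mul_of_derivation (D := (contract R u).toAddMonoidHom) (commute_bivec H.Ω_comm _).symm
      (contract_bivec_mul H.Ω_skew H.Ω_comm u) j 1
  rw [contract_one, mul_one, mul_one, mul_zero, add_zero] at hpow
  rw [hpow, neg_mul, smul_neg, smul_mul_assoc, smul_smul, mul_comm j]

lemma topCoeff_vec_θ_pow_mul_bivec_Ω_pow [IsAddTorsionFree A]
    (H : IsSphereBundleCalculus d u θ ω Ω) (m j : ℕ) :
    topCoeff R A N (vec R θ ^ m * bivec R Ω ^ j) = -((2 * j) • topCoeff R A N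
      (vec R u * vec R (Ω.mulVec u) * vec R θ ^ m * bivec R Ω ^ (j - 1))) := by
  have hswap : (-vec R θ) ^ m * vec R (Ω.mulVec u) = vec R (Ω.mulVec u) * vec R θ ^ m := by
    have hsemi : SemiconjBy (vec R (Ω.mulVec u)) (vec R θ) (-vec R θ) := by
      rw [SemiconjBy, H.vec_mulVec_mul_vec_θ, neg_mul]
    exact (hsemi.pow_right m).eq.symm
  rw [topCoeff_eq_topCoeff_vec_mul_contract (fun i j => H.u_comm i (u j)) H.unit,
    H.contract_u_vec_θ_pow_mul, H.contract_u_bivec_Ω_pow, mul_neg, mul_smul_comm,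
    ← mul_assoc _ _ (bivec R Ω ^ _), hswap, mul_neg, mul_smul_comm, map_neg, map_nsmul]
  simp only [mul_assoc]

end IsSphereBundleCalculus

end SphereBundle

section ClosednessOfPsi

namespace IsSphereBundleCalculus

variable {A : Type*} [Ring A] [Algebra ℝ A] {d : A →ₗ[ℝ] A}

lemma sum_range_smul_d_topCoeff [IsAddTorsionFree A] {N : ℕ} {u θ : Fin N → A}
    {ω Ω : Matrix (Fin N) (Fin N) A} (H : IsSphereBundleCalculus d u θ ω Ω) (n J : ℕ)
    (hJ : 2 * J ≤ n) :
    ∑ j ∈ Finset.range (J + 1), (2 ^ j * j ! * (n - 2 * j)‼ : ℝ)⁻¹ •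
        d (topCoeff ℝ A N (vec ℝ u * vec ℝ θ ^ (n - 2 * j) * bivec ℝ Ω ^ j)) =
      ((2 ^ J * J ! * (n - 2 * J)‼ : ℝ)⁻¹ * (n - 2 * J : ℕ)) • topCoeff ℝ A N
        (vec ℝ u * vec ℝ (Ω.mulVec u) * vec ℝ θ ^ (n - 2 * J - 1) * bivec ℝ Ω ^ J) := by
  induction J with
  | zero =>
    rw [Finset.sum_range_one, H.d_topCoeff_vec_u_mul_pow_mul_pow,
      H.topCoeff_vec_θ_pow_mul_bivec_Ω_pow, mul_zero, zero_smul, neg_zero, zero_add,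
      ← Nat.cast_smul_eq_nsmul ℝ, smul_smul]
  | succ J ih =>
    obtain ⟨k, rfl⟩ : ∃ k, n = k + 2 + 2 * J := ⟨n - 2 - 2 * J, by omega⟩
    have hcoeff : (2 ^ J * J ! * (k + 2)‼ : ℝ)⁻¹ * (k + 2 : ℕ) =
        (2 ^ (J + 1) * (J + 1)! * k‼ : ℝ)⁻¹ * (2 * (J + 1) : ℕ) := by
      have hk : (k‼ : ℝ) ≠ 0 := mod_cast (Nat.doubleFactorial_pos k).ne'
      have hJ : (J ! : ℝ) ≠ 0 := mod_cast J.factorial_ne_zero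
      rw [Nat.doubleFactorial_add_two, Nat.factorial_succ]
      push_cast
      field_simp
      ring
    have hdeg : k + 2 + 2 * J - 2 * J = k + 2 := by omega
    have hdeg' : k + 2 + 2 * J - 2 * (J + 1) = k := by omega
    rw [Finset.sum_range_succ, ih (by omega), H.d_topCoeff_vec_u_mul_pow_mul_pow,
      H.topCoeff_vec_θ_pow_mul_bivec_Ω_pow, hdeg, hdeg', hcoeff, ← Nat.cast_smul_eq_nsmul ℝ,
      ← Nat.cast_smul_eq_nsmul ℝ k]
    simp only [smul_add, smul_neg, smul_smul, Nat.add_sub_cancel, Nat.add_succ_sub_one]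
    abel

variable {n : ℕ} {u θ : Fin (n + 1) → A} {ω Ω : Matrix (Fin (n + 1)) (Fin (n + 1)) A}

lemma d_psiForm [IsAddTorsionFree A] (H : IsSphereBundleCalculus d u θ ω Ω) :
    d (psiForm n u θ Ω) = ((n - 1)‼ * sphereVolume n)⁻¹ •
      ((2 ^ (n / 2) * (n / 2)! * (n - 2 * (n / 2))‼ : ℝ)⁻¹ * (n - 2 * (n / 2) : ℕ)) •
        topCoeff ℝ A (n + 1) (vec ℝ u * vec ℝ (Ω.mulVec u) * vec ℝ θ ^ (n - 2 * (n / 2) - 1) *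
          bivec ℝ Ω ^ (n / 2)) := by
  rw [← H.sum_range_smul_d_topCoeff n (n / 2) (by omega), Finset.sum_range]
  simp only [psiForm, map_smul, map_sum, psiJ_eq_topCoeff (R := ℝ)]

lemma d_psiForm_of_even [IsAddTorsionFree A] (H : IsSphereBundleCalculus d u θ ω Ω)
    (hn : Even n) : d (psiForm n u θ Ω) = 0 := by
  rw [H.d_psiForm, Nat.two_mul_div_two_of_even hn, Nat.sub_self, Nat.cast_zero, mul_zero, zero_smul,
    smul_zero]

lemma d_psiForm_of_odd [IsAddTorsionFree A] (H : IsSphereBundleCalculus d u θ ω Ω) (hn : Odd n) :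
    d (psiForm n u θ Ω) = -(((n - 1)‼ * sphereVolume n)⁻¹ •
      (2 ^ ((n + 1) / 2) * ((n + 1) / 2)! : ℝ)⁻¹ • eulerForm ℝ Ω) := by
  obtain ⟨J, rfl⟩ := hn
  have hhalf : (2 * J + 1) / 2 = J := by omega
  have hhalf' : (2 * J + 1 + 1) / 2 = J + 1 := by omega
  have hdeg : 2 * J + 1 - 2 * J = 1 := by omega
  have heuler := H.topCoeff_vec_θ_pow_mul_bivec_Ω_pow (R := ℝ) 0 (J + 1)
  have hcoeff : (2 ^ (J + 1) * (J + 1)! : ℝ)⁻¹ * (2 * (J + 1) : ℕ) = (2 ^ J * J ! : ℝ)⁻¹ := by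
    rw [Nat.factorial_succ]
    push_cast
    field_simp
    ring
  rw [pow_zero, one_mul, Nat.add_sub_cancel, ← Nat.cast_smul_eq_nsmul ℝ] at heuler
  rw [H.d_psiForm, eulerForm, hhalf, hhalf', heuler, hdeg, smul_neg, smul_neg, neg_neg,
    smul_smul _ ((2 * (J + 1) : ℕ) : ℝ), hcoeff]
  simp

end IsSphereBundleCalculus

end ClosednessOfPsi

end ChernEuler

open ChernEuler in
theorem dPsi_eq_zero_of_induced_connection_general {A : Type*} [Ring A] [Algebra ℝ A]
    {d : A →ₗ[ℝ] A} {n : ℕ} {u θ : Fin (n + 1) → A}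
    {ω Ω : Matrix (Fin (n + 1)) (Fin (n + 1)) A} (H : IsSphereBundleCalculus d u θ ω Ω)
    (heuler : Odd n → eulerForm ℝ Ω = 0) : d (psiForm n u θ Ω) = 0 := by
  have : IsAddTorsionFree A := IsAddTorsionFree.of_isTorsionFree ℝ A
  rcases n.even_or_odd with hn | hn
  · exact H.d_psiForm_of_even hn
  · rw [H.d_psiForm_of_odd hn, heuler hn, smul_zero, smul_zero, neg_zero]

theorem dPsi_eq_zero_of_induced_connection
    {A : Type*} [Ring A] [Algebra ℝ A]
    -- the exterior differential
    (d : A →ₗ[ℝ] A)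
    (n : ℕ)
    -- the tautological coordinates, the forms `θ`, the connection and
    -- curvature forms, with respect to a local oriented orthonormal frame
    -- of `E = ν ⊕ ξ` whose first member is the canonical unit section of `ν`
    (u θ : Fin (n + 1) → A) (ω Ω : Fin (n + 1) → Fin (n + 1) → A)
    -- `θ = du + ωu`
    (hθ : ∀ i, θ i = d (u i) + ∑ j, ω i j * u j)
    -- `Ω = dω + ω ∧ ω`
    (hΩ : ∀ i j, Ω i j = d (ω i j) + ∑ k, ω i k * ω k j)
    -- the connection is an `SO(n+1)`-connection
    (hskew : ∀ i j, ω i j = -ω j i)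
    -- the unit sphere bundle: `Σᵢ uᵢ² = 1`
    (hunit : (∑ i, u i * u i) = 1)
    -- graded commutation rules
    (hu_comm : ∀ i x, u i * x = x * u i)
    (hΩ_comm : ∀ i j x, Ω i j * x = x * Ω i j)
    (hθθ : ∀ i j, θ i * θ j = -(θ j * θ i))
    (hθω : ∀ i j k, θ i * ω j k = -(ω j k * θ i))
    (hωω : ∀ i j k l, ω i j * ω k l = -(ω k l * ω i j))
    -- `d ∘ d = 0` and the graded Leibniz rule
    (hdd : ∀ x, d (d x) = 0)
    (hdu : ∀ i x, d (u i * x) = d (u i) * x + u i * d x)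
    (hdθ : ∀ i x, d (θ i * x) = d (θ i) * x - θ i * d x)
    (hdω : ∀ i j x, d (ω i j * x) = d (ω i j) * x - ω i j * d x)
    (hdΩ : ∀ i j x, d (Ω i j * x) = d (Ω i j) * x + Ω i j * d x)
    -- the connection is induced from `ν ⊕ ξ` with the trivial connection on
    -- `ν`: the first row and column of `ω` and of `Ω` vanish
    (hωrow : ∀ j, ω 0 j = 0) (hωcol : ∀ i, ω i 0 = 0)
    (hΩrow : ∀ j, Ω 0 j = 0) (hΩcol : ∀ i, Ω i 0 = 0) :
    d (psiForm n u θ Ω) = 0 := by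
  have H : ChernEuler.IsSphereBundleCalculus d u θ (.of ω) (.of Ω) :=
    ⟨hθ, hΩ, hskew, hunit, hu_comm, hΩ_comm, hθω, hωω, hdd, hdu, hdθ, hdω, hdΩ⟩
  exact dPsi_eq_zero_of_induced_connection_general H fun _ =>
    ChernEuler.eulerForm_eq_zero_of_col_eq_zero H.Ω_skew H.Ω_comm (funext hΩcol)

end
end
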